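/- There exists a contractible open 3-manifold W (a connected, noncompact, contractible topological 3-manifold without boundary) which is not simply connected at infinity — in particular W is not homeomorphic to ℝ³ — but such that the product W × ℝ is homeomorphic to ℝ⁴. -/

import Mathlib

/-- A space is *simply connected at infinity* if for every compact `k` there is a larger
compact `K` such that every loop (map of the circle) avoiding `K` bounds a disk avoiding `k`. -/
def SimplyConnectedAtInfinity (X : Type*) [TopologicalSpace X] : Prop :=
  ∀ k : Set X, IsCompact k → ∃ K : Set X, IsCompact K ∧ k ⊆ K ∧
    ∀ γ : (Metric.sphere (0 : EuclideanSpace ℝ (Fin 2)) 1) → X,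
      Continuous γ → (∀ z, γ z ∉ K) →
      ∃ H : (Metric.closedBall (0 : EuclideanSpace ℝ (Fin 2)) 1) → X,
        Continuous H ∧ (∀ z, H z ∉ k) ∧
        ∀ (z : EuclideanSpace ℝ (Fin 2)) (hz : z ∈ Metric.sphere (0 : EuclideanSpace ℝ (Fin 2)) 1),
          H ⟨z, Metric.sphere_subset_closedBall hz⟩ = γ ⟨z, hz⟩

/-- A bundled contractible open 3-manifold: a connected, noncompact, contractible
topological 3-manifold without boundary. -/
structure ContractibleOpen3Manifold where
  carrier : Type
  [top : TopologicalSpace carrier]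
  [t2 : T2Space carrier]
  [secondCountable : SecondCountableTopology carrier]
  [charted : ChartedSpace (EuclideanSpace ℝ (Fin 3)) carrier]
  [conn : ConnectedSpace carrier]
  [noncompact : NoncompactSpace carrier]
  [contractible : ContractibleSpace carrier]

attribute [instance] ContractibleOpen3Manifold.top ContractibleOpen3Manifold.t2
  ContractibleOpen3Manifold.secondCountable ContractibleOpen3Manifold.charted
  ContractibleOpen3Manifold.conn ContractibleOpen3Manifold.noncompact
  ContractibleOpen3Manifold.contractible

/-!
The Whitehead manifold `W` is the telescope of the self-embedding `h` of an open solid torus whose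
core is carried to a Whitehead curve. As `h` is null-homotopic, it lifts to the universal covering
of the solid torus; after multiplication with `ℝ` this lift can be used to shear the image of `h`
into a cell. So every compact subset of `W × ℝ` lies in an open cell, and `W × ℝ` is homeomorphic
to `ℝ⁴` by Brown's theorem on monotone unions of open cells. In particular `W` is contractible.

The complement in `W` of the innermost curve carries a flat bundle with structure group `S₅`: the
group of the Whitehead link has a representation in `S₅` whose restrictions to the two boundary
tori are conjugate, so copies of the resulting bundle on the complement of the link can be glued
along `W`. Its holonomy along the meridian of each stage is nontrivial, so none of these meridians,
which leave every compact set, bounds a disk off the innermost curve.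
-/

open Set Filter Topology

/-! ### Local cocycles and their potentials -/

section LocalCocycle

variable {X Y G : Type*} [TopologicalSpace X] [TopologicalSpace Y] [Group G]

/-- `c` is a *local cocycle* (an Alexander–Spanier `1`-cocycle) on `S` with values in the group `G`:
near every point of `S` the values `c p q` compose. Read `c p q` as the parallel transport from `p`
to `q` of a flat `G`-bundle; only its values at nearby points matter. -/
def IsLocalCocycleOn (c : X → X → G) (S : Set X) : Prop :=
  ∀ x ∈ S, ∃ U ∈ 𝓝[S] x, ∀ p ∈ U, ∀ q ∈ U, ∀ r ∈ U, c p q * c q r = c p r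

/-- `τ` is a *local potential* of `c` on `S`: near every point of `S`, `c` is the coboundary of `τ`.
Along a path, `τ` records the holonomy of the flat bundle described by `c`. -/
def IsLocalPotentialOn (c : X → X → G) (τ : X → G) (S : Set X) : Prop :=
  ∀ x ∈ S, ∃ U ∈ 𝓝[S] x, ∀ p ∈ U, ∀ q ∈ U, c p q = (τ p)⁻¹ * τ q

lemma IsLocalCocycleOn.comp {c : X → X → G} {S : Set X} (hc : IsLocalCocycleOn c S) {T : Set Y}
    {f : Y → X} (hf : ContinuousOn f T) (hfS : MapsTo f T S) :
    IsLocalCocycleOn (fun p q ↦ c (f p) (f q)) T := by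
  intro y hy
  obtain ⟨U, hU, h⟩ := hc (f y) (hfS hy)
  exact ⟨f ⁻¹' U, (hf y hy).tendsto_nhdsWithin hfS hU,
    fun p hp q hq r hr ↦ h _ hp _ hq _ hr⟩

namespace IsLocalPotentialOn

variable {c : X → X → G} {τ τ' : X → G} {S : Set X}

lemma comp (hτ : IsLocalPotentialOn c τ S) {T : Set Y} {f : Y → X} (hf : ContinuousOn f T)
    (hfS : MapsTo f T S) : IsLocalPotentialOn (fun p q ↦ c (f p) (f q)) (fun p ↦ τ (f p)) T := by
  intro y hy
  obtain ⟨U, hU, h⟩ := hτ (f y) (hfS hy)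
  exact ⟨f ⁻¹' U, (hf y hy).tendsto_nhdsWithin hfS hU, fun p hp q hq ↦ h _ hp _ hq⟩

lemma mono (hτ : IsLocalPotentialOn c τ S) {T : Set X} (hTS : T ⊆ S) :
    IsLocalPotentialOn c τ T :=
  hτ.comp continuousOn_id hTS

lemma const_mul (hτ : IsLocalPotentialOn c τ S) (g : G) :
    IsLocalPotentialOn c (fun p ↦ g * τ p) S := by
  intro x hx
  obtain ⟨U, hU, h⟩ := hτ x hx
  exact ⟨U, hU, fun p hp q hq ↦ by rw [h p hp q hq]; group⟩

lemma mul_inv_eq_mul_inv (hτ : IsLocalPotentialOn c τ S) (hτ' : IsLocalPotentialOn c τ' S)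
    (hS : IsPreconnected S) {p q : X} (hp : p ∈ S) (hq : q ∈ S) :
    τ p * (τ' p)⁻¹ = τ q * (τ' q)⁻¹ := by
  refine hS.induction₂' (fun p q ↦ τ p * (τ' p)⁻¹ = τ q * (τ' q)⁻¹) (fun x hx ↦ ?_)
    (fun _ _ _ _ _ _ h₁ h₂ ↦ h₁.trans h₂) hp hq
  obtain ⟨U, hU, h⟩ := hτ x hx
  obtain ⟨V, hV, h'⟩ := hτ' x hx
  filter_upwards [hU, hV] with y hyU hyV
  have hxy : (τ x)⁻¹ * τ y = (τ' x)⁻¹ * τ' y :=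
    (h x (mem_of_mem_nhdsWithin hx hU) y hyU).symm.trans
      (h' x (mem_of_mem_nhdsWithin hx hV) y hyV)
  have : τ x * (τ' x)⁻¹ = τ y * (τ' y)⁻¹ := by
    rw [inv_mul_eq_iff_eq_mul.mp hxy]; group
  exact ⟨this, this.symm⟩

lemma eqOn (hτ : IsLocalPotentialOn c τ S) (hτ' : IsLocalPotentialOn c τ' S)
    (hS : IsPreconnected S) {p : X} (hp : p ∈ S) (h : τ p = τ' p) : EqOn τ τ' S := fun q hq ↦ by
  have := hτ.mul_inv_eq_mul_inv hτ' hS hp hq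
  rwa [h, mul_inv_cancel, eq_comm, mul_inv_eq_one] at this

end IsLocalPotentialOn

section Chain

variable {E : Type*} [PseudoMetricSpace E] {Ω : Set E} {c : E → E → G} {δ : ℝ}

lemma IsLocalCocycleOn.exists_uniform (hc : IsLocalCocycleOn c Ω) (hΩ : IsCompact Ω) :
    ∃ δ > 0, ∀ p ∈ Ω, ∀ q ∈ Ω, ∀ r ∈ Ω, dist p q < δ → dist p r < δ → c p q * c q r = c p r := by
  choose U hU h using hc
  obtain ⟨V, hV, hVU⟩ := lebesgue_number_lemma_nhdsWithin' hΩ hU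
  obtain ⟨δ, hδ, hδV⟩ := Metric.mem_uniformity_dist.mp hV
  refine ⟨δ, hδ, fun p hp q hq r hr hpq hpr ↦ ?_⟩
  obtain ⟨y, hy⟩ := hVU p hp
  exact h y y.2 p (hy ⟨hδV (by simpa), hp⟩) q (hy ⟨hδV hpq, hq⟩) r (hy ⟨hδV hpr, hr⟩)

/-- The transport `c (u 0) (u 1) * ⋯ * c (u (n - 1)) (u n)` of `c` along the chain `u`. -/
def chainTransport (c : E → E → G) (u : ℕ → E) (n : ℕ) : G :=
  ((List.range n).map fun i ↦ c (u i) (u (i + 1))).prod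

/-- Both ways around each square of the ladder formed by the two chains have the same transport. -/
lemma chainTransport_mul {u v : ℕ → E} {n : ℕ}
    (hc : ∀ p ∈ Ω, ∀ q ∈ Ω, ∀ r ∈ Ω, dist p q < 2 * δ → dist p r < 2 * δ → c p q * c q r = c p r)
    (hu : ∀ i ≤ n, u i ∈ Ω) (hv : ∀ i ≤ n, v i ∈ Ω) (hδ : 0 < δ) (h0 : u 0 = v 0)
    (hstep : ∀ i < n, dist (u i) (u (i + 1)) < δ) (huv : ∀ i ≤ n, dist (u i) (v i) < δ) :
    chainTransport c u n * c (u n) (v n) = chainTransport c v n := by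
  induction n with
  | zero =>
    have := hc _ (hu 0 le_rfl) _ (hu 0 le_rfl) _ (hu 0 le_rfl) (by simpa) (by simpa)
    simpa [chainTransport, ← h0] using this
  | succ n ih =>
    have ih := ih (fun i hi ↦ hu i (by lia)) (fun i hi ↦ hv i (by lia))
      (fun i hi ↦ hstep i (by lia)) (fun i hi ↦ huv i (by lia))
    have hdiag : dist (u n) (v (n + 1)) < 2 * δ := by
      linarith [dist_triangle (u n) (u (n + 1)) (v (n + 1)), hstep n n.lt_succ_self,
        huv (n + 1) le_rfl]
    have hlower : c (u n) (u (n + 1)) * c (u (n + 1)) (v (n + 1)) = c (u n) (v (n + 1)) :=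
      hc _ (hu n n.le_succ) _ (hu _ le_rfl) _ (hv _ le_rfl)
        (by linarith [hstep n n.lt_succ_self]) hdiag
    have hupper : c (u n) (v n) * c (v n) (v (n + 1)) = c (u n) (v (n + 1)) :=
      hc _ (hu n n.le_succ) _ (hv n n.le_succ) _ (hv _ le_rfl)
        (by linarith [huv n n.le_succ]) hdiag
    simp only [chainTransport, List.prod_range_succ] at ih ⊢
    rw [mul_assoc, hlower, ← hupper, ← mul_assoc, ih]

end Chain

variable {E : Type*} [NormedAddCommGroup E] [NormedSpace ℝ E] {c : E → E → G}

open AffineMap in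
/-- The potential at `p` is the transport along a fine subdivision of the segment from a base
point to `p`. -/
lemma IsLocalCocycleOn.exists_potential_of_convex {Ω : Set E} (hc : IsLocalCocycleOn c Ω)
    (hΩ : IsCompact Ω) (hconv : Convex ℝ Ω) : ∃ τ : E → G, IsLocalPotentialOn c τ Ω := by
  obtain rfl | ⟨a, ha⟩ := Ω.eq_empty_or_nonempty
  · exact ⟨fun _ ↦ 1, fun x hx ↦ hx.elim⟩
  obtain ⟨δ, hδ, hcδ⟩ := hc.exists_uniform hΩ
  obtain ⟨D, hD⟩ := hΩ.isBounded.subset_closedBall a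
  obtain ⟨N, hN⟩ := exists_nat_gt (max D 0 / (δ / 2))
  have hN0 : (0 : ℝ) < N := lt_of_le_of_lt (by positivity) hN
  set u : E → ℕ → E := fun p i ↦ lineMap a p ((i : ℝ) / N)
  have hu0 (p) : u p 0 = a := by simp [u]
  have huN (p) : u p N = p := by simp [u, hN0.ne']
  have hmem {i : ℕ} (hi : i ≤ N) : (i : ℝ) / N ∈ Icc (0 : ℝ) 1 :=
    ⟨by positivity, (div_le_one hN0).mpr (by exact_mod_cast hi)⟩
  have huΩ {p} (hp : p ∈ Ω) (i : ℕ) (hi : i ≤ N) : u p i ∈ Ω := hconv.lineMap_mem ha hp (hmem hi)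
  have hstep {p} (hp : p ∈ Ω) (i : ℕ) : dist (u p i) (u p (i + 1)) < δ / 2 := by
    have hpD : dist a p ≤ max D 0 := (dist_comm a p).trans_le ((hD hp).trans (le_max_left _ _))
    have hi : dist ((i : ℝ) / N) ((i + 1 : ℕ) / N) = 1 / N := by
      rw [dist_comm, Real.dist_eq, ← sub_div]; simp
    rw [dist_lineMap_lineMap, hi, one_div_mul_eq_div, div_lt_iff₀ hN0]
    rw [div_lt_iff₀ (by positivity)] at hN
    linarith
  have huv (p q) (hpq : dist p q < δ / 2) (i : ℕ) (hi : i ≤ N) : dist (u p i) (u q i) < δ / 2 := by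
    have hsub : u p i - u q i = ((i : ℝ) / N) • (p - q) := by
      simp only [u, lineMap_apply_module']; module
    rw [dist_eq_norm, hsub, norm_smul, Real.norm_of_nonneg (hmem hi).1, ← dist_eq_norm]
    exact (mul_le_of_le_one_left dist_nonneg (hmem hi).2).trans_lt hpq
  refine ⟨fun p ↦ chainTransport c (u p) N, fun x _ ↦ ⟨Ω ∩ Metric.ball x (δ / 4),
    inter_mem_nhdsWithin _ (Metric.ball_mem_nhds _ (by positivity)), ?_⟩⟩
  rintro p ⟨hp, hpx⟩ q ⟨hq, hqx⟩
  have hpq : dist p q < δ / 2 := by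
    linarith [dist_triangle_right p q x, Metric.mem_ball.mp hpx, Metric.mem_ball.mp hqx]
  have := chainTransport_mul (u := u p) (v := u q) (n := N) (by simpa [mul_div_cancel₀] using hcδ)
    (huΩ hp) (huΩ hq) (half_pos hδ) (by rw [hu0, hu0]) (fun i _ ↦ hstep hp i) (huv p q hpq)
  rw [huN, huN] at this
  exact eq_inv_mul_of_mul_eq this

/-- The potentials on the balls around `0`, normalized at `0`, fit together. -/
lemma IsLocalCocycleOn.exists_potential_univ [ProperSpace E] (hc : IsLocalCocycleOn c univ) :
    ∃ τ : E → G, IsLocalPotentialOn c τ univ ∧ τ 0 = 1 := by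
  have hball (n : ℕ) :
      ∃ τ : E → G, IsLocalPotentialOn c τ (Metric.closedBall 0 n) ∧ τ 0 = 1 := by
    obtain ⟨τ, hτ⟩ := IsLocalCocycleOn.exists_potential_of_convex
      (hc.comp continuousOn_id (mapsTo_univ _ (Metric.closedBall (0 : E) n)))
      (isCompact_closedBall _ _) (convex_closedBall _ _)
    exact ⟨_, hτ.const_mul (τ 0)⁻¹, inv_mul_cancel _⟩
  choose τ hτ hτ0 using hball
  have hmono {m n : ℕ} (hmn : m ≤ n) :
      EqOn (τ m) (τ n) (Metric.closedBall 0 m) :=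
    (hτ m).eqOn ((hτ n).mono (Metric.closedBall_subset_closedBall (by exact_mod_cast hmn)))
      (convex_closedBall _ _).isPreconnected (by simp) ((hτ0 m).trans (hτ0 n).symm)
  refine ⟨fun p ↦ τ ⌈‖p‖⌉₊ p, fun x _ ↦ ?_, hτ0 _⟩
  obtain ⟨n, hn⟩ := exists_nat_gt ‖x‖
  have hball : Metric.closedBall (0 : E) n ∈ 𝓝 x :=
    Metric.closedBall_mem_nhds_of_mem (by simpa using hn)
  have hp {p : E} (hp : p ∈ Metric.closedBall 0 (n : ℝ)) : τ ⌈‖p‖⌉₊ p = τ n p :=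
    hmono (Nat.ceil_le.mpr (by simpa using hp)) (by simpa using Nat.le_ceil ‖p‖)
  obtain ⟨U, hU, h⟩ := hτ n x (mem_of_mem_nhds hball)
  rw [nhdsWithin_eq_nhds.mpr hball] at hU
  exact ⟨U ∩ Metric.closedBall 0 n, mem_nhdsWithin_of_mem_nhds (inter_mem hU hball),
    fun p hpU q hqU ↦ by simp only [hp hpU.2, hp hqU.2, h p hpU.1 q hqU.1]⟩

end LocalCocycle

/-! ### Brown's theorem on monotone unions of open cells -/

/-- The witness is piecewise linear, with breakpoints `δ`, `r` and `R`. -/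
lemma exists_orderIso_eq_self_lt {δ ε r R : ℝ} (hδε : δ < ε) (hδr : δ < r) (hrR : r < R) :
    ∃ ρ : ℝ ≃o ℝ, (∀ t ≤ δ, ρ t = t) ∧ (∀ t, R ≤ t → ρ t = t) ∧ ρ r < ε := by
  obtain ⟨e, hδe, he⟩ := exists_between (lt_min hδε hδr)
  obtain ⟨heε, her⟩ := lt_min_iff.mp he
  set s := (e - δ) / (r - δ)
  set S := (R - e) / (R - r)
  have hs : 0 < s := div_pos (by linarith) (by linarith)
  have hs1 : s ≤ 1 := (div_le_one (by linarith)).mpr (by linarith)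
  have hS1 : 1 ≤ S := (one_le_div (by linarith)).mpr (by linarith)
  have hsr : s * (r - δ) = e - δ := div_mul_cancel₀ _ (by linarith)
  have hSr : S * (R - r) = R - e := div_mul_cancel₀ _ (by linarith)
  let f : ℝ → ℝ := fun t ↦ min t (max (δ + s * (t - δ)) (R - S * (R - t)))
  have hf : StrictMono f := fun a b hab ↦ by
    have hsab : s * (a - δ) < s * (b - δ) := mul_lt_mul_of_pos_left (by linarith) hs
    have hSab : S * (R - b) < S * (R - a) := by gcongr
    exact min_lt_min hab (max_lt_max (by linarith) (by linarith))
  have hfδ : ∀ t ≤ δ, f t = t := fun t ht ↦ min_eq_left (le_max_of_le_left (by nlinarith))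
  have hfR : ∀ t, R ≤ t → f t = t := fun t ht ↦ min_eq_left (le_max_of_le_right (by nlinarith))
  have hfsurj : Function.Surjective f := Continuous.surjective (by fun_prop)
    (tendsto_id.congr' ((eventually_ge_atTop R).mono fun t ht ↦ (hfR t ht).symm))
    (tendsto_id.congr' ((eventually_le_atBot δ).mono fun t ht ↦ (hfδ t ht).symm))
  refine ⟨hf.orderIsoOfSurjective f hfsurj, hfδ, hfR, (min_le_right _ _).trans_lt ?_⟩
  rw [hsr, hSr]
  simpa using heε

section Radial

variable {E : Type*} [NormedAddCommGroup E] [NormedSpace ℝ E]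

/-- The radial extension of a self-map `ρ` of the norm axis: it sends the sphere of radius `t` to
the sphere of radius `ρ t`, for `ρ` nonnegative on `[0, ∞)`. It fixes `0`. -/
noncomputable def radialMap (ρ : ℝ → ℝ) (x : E) : E :=
  (ρ ‖x‖ / ‖x‖) • x

lemma radialMap_of_eq {ρ : ℝ → ℝ} {x : E} (hx : ρ ‖x‖ = ‖x‖) : radialMap ρ x = x := by
  obtain rfl | h := eq_or_ne x 0
  · simp [radialMap]
  · rw [radialMap, hx, div_self (norm_ne_zero_iff.mpr h), one_smul]

lemma norm_radialMap {ρ : ℝ ≃o ℝ} (hρ : ρ 0 = 0) (x : E) : ‖radialMap ρ x‖ = ρ ‖x‖ := by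
  obtain rfl | h := eq_or_ne x 0
  · simp [radialMap, hρ]
  · have : 0 ≤ ρ ‖x‖ := hρ.symm.trans_le (ρ.monotone (norm_nonneg x))
    rw [radialMap, norm_smul, Real.norm_of_nonneg (by positivity),
      div_mul_cancel₀ _ (norm_ne_zero_iff.mpr h)]

lemma radialMap_symm_radialMap {ρ : ℝ ≃o ℝ} (hρ : ρ 0 = 0) (x : E) :
    radialMap ρ.symm (radialMap ρ x) = x := by
  obtain rfl | h := eq_or_ne x 0
  · simp [radialMap]
  · have hx : ‖x‖ ≠ 0 := norm_ne_zero_iff.mpr h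
    have hρx : ρ ‖x‖ ≠ 0 := hρ ▸ ρ.injective.ne hx
    rw [radialMap, norm_radialMap hρ, ρ.symm_apply_apply, radialMap, smul_smul,
      div_mul_div_cancel₀ hρx, div_self hx, one_smul]

lemma radialMap_eventuallyEq_id {ρ : ℝ → ℝ} {δ : ℝ} (hδ : 0 < δ) (hρ : ∀ t ≤ δ, ρ t = t) :
    radialMap ρ =ᶠ[𝓝 (0 : E)] id := by
  filter_upwards [Metric.closedBall_mem_nhds 0 hδ] with x hx
  exact radialMap_of_eq (hρ _ (by simpa using hx))

lemma continuous_radialMap {ρ : ℝ → ℝ} (hρc : Continuous ρ) {δ : ℝ} (hδ : 0 < δ)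
    (hρ : ∀ t ≤ δ, ρ t = t) : Continuous (radialMap ρ : E → E) := by
  refine continuous_iff_continuousAt.mpr fun x ↦ ?_
  obtain rfl | h := eq_or_ne x 0
  · exact continuousAt_id.congr (radialMap_eventuallyEq_id hδ hρ).symm
  · exact ((hρc.comp continuous_norm).continuousAt.div continuous_norm.continuousAt
      (norm_ne_zero_iff.mpr h)).smul continuousAt_id

lemma exists_homeomorph_mapsTo_closedBall {U : Set E} (hU : U ∈ 𝓝 0) {r R : ℝ} (hr : 0 < r)
    (hrR : r < R) :
    ∃ φ : E ≃ₜ E, φ =ᶠ[𝓝 0] id ∧ (∀ x ∉ Metric.closedBall 0 R, φ x = x) ∧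
      MapsTo φ (Metric.closedBall 0 r) U := by
  obtain ⟨ε, hε, hεU⟩ := Metric.mem_nhds_iff.mp hU
  obtain ⟨δ, hδ, hδm⟩ := exists_between (lt_min hε hr)
  obtain ⟨hδε, hδr⟩ := lt_min_iff.mp hδm
  obtain ⟨ρ, hρδ, hρR, hρr⟩ := exists_orderIso_eq_self_lt hδε hδr hrR
  have hρδ' : ∀ t ≤ δ, ρ.symm t = t := fun t ht ↦ by rw [OrderIso.symm_apply_eq, hρδ t ht]
  let φ : E ≃ₜ E :=
    { toFun := radialMap ρ
      invFun := radialMap ρ.symm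
      left_inv := radialMap_symm_radialMap (hρδ 0 hδ.le)
      right_inv := radialMap_symm_radialMap (ρ := ρ.symm) (hρδ' 0 hδ.le)
      continuous_toFun := continuous_radialMap ρ.continuous hδ hρδ
      continuous_invFun := continuous_radialMap ρ.symm.continuous hδ hρδ' }
  refine ⟨φ, radialMap_eventuallyEq_id hδ hρδ, fun x hx ↦ ?_, fun x hx ↦ hεU ?_⟩
  · exact radialMap_of_eq (hρR _ (by simpa using (not_le.mp (by simpa using hx)).le))
  · rw [mem_ball_zero_iff]
    exact (norm_radialMap (hρδ 0 hδ.le) x).trans_lt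
      ((ρ.monotone (mem_closedBall_zero_iff.mp hx)).trans_lt hρr)

end Radial

section ExtendById

variable {X Y : Type*} [TopologicalSpace X] [T2Space X] [TopologicalSpace Y] {f : Y → X} {K : Set Y}

lemma continuous_viaEmbedding (hf : IsOpenEmbedding f) (φ : Y ≃ₜ Y) (hK : IsCompact K)
    (hφ : ∀ y ∉ K, φ y = y) :
    Continuous (Equiv.Perm.viaEmbedding φ.toEquiv ⟨f, hf.injective⟩) := by
  set Φ := Equiv.Perm.viaEmbedding φ.toEquiv ⟨f, hf.injective⟩
  have hΦ (y) : Φ (f y) = f (φ y) := Equiv.Perm.viaEmbedding_apply φ.toEquiv ⟨f, hf.injective⟩ y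
  refine continuous_iff_continuousAt.mpr fun x ↦ ?_
  by_cases hx : x ∈ range f
  · obtain ⟨y, rfl⟩ := hx
    rw [← hf.continuousAt_iff]
    exact (hf.continuous.comp φ.continuous).continuousAt.congr (.of_forall fun y ↦ (hΦ y).symm)
  · refine continuousAt_id.congr ?_
    filter_upwards [(hK.image hf.continuous).isClosed.isOpen_compl.mem_nhds
      fun ⟨y, _, hy⟩ ↦ hx ⟨y, hy⟩] with z hz
    by_cases hzf : z ∈ range f
    · obtain ⟨y, rfl⟩ := hzf
      rw [hΦ, hφ y fun hy ↦ hz ⟨y, hy, rfl⟩, id]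
    · exact (Equiv.Perm.viaEmbedding_apply_of_notMem _ _ z hzf).symm

lemma exists_homeomorph_extend (hf : IsOpenEmbedding f) (φ : Y ≃ₜ Y) (hK : IsCompact K)
    (hφ : ∀ y ∉ K, φ y = y) :
    ∃ Φ : X ≃ₜ X, (∀ y, Φ (f y) = f (φ y)) ∧ ∀ x ∉ f '' K, Φ x = x := by
  let f' : Y ↪ X := ⟨f, hf.injective⟩
  have hinv (ψ : Y ≃ₜ Y) (x : X) : Equiv.Perm.viaEmbedding ψ.symm.toEquiv f'
      (Equiv.Perm.viaEmbedding ψ.toEquiv f' x) = x := by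
    by_cases hx : x ∈ range f'
    · obtain ⟨y, rfl⟩ := hx
      simp [Equiv.Perm.viaEmbedding_apply]
    · simp only [Equiv.Perm.viaEmbedding_apply_of_notMem _ _ x hx]
  let Φ : X ≃ₜ X :=
    { toFun := Equiv.Perm.viaEmbedding φ.toEquiv f'
      invFun := Equiv.Perm.viaEmbedding φ.symm.toEquiv f'
      left_inv := hinv φ
      right_inv := hinv φ.symm
      continuous_toFun := continuous_viaEmbedding hf φ hK hφ
      continuous_invFun := continuous_viaEmbedding hf φ.symm hK fun y hy ↦ by
        rw [Homeomorph.symm_apply_eq, hφ y hy] }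
  have hΦ (y) : Φ (f y) = f (φ y) := Equiv.Perm.viaEmbedding_apply φ.toEquiv f' y
  refine ⟨Φ, hΦ, fun x hx ↦ ?_⟩
  by_cases hxf : x ∈ range f'
  · obtain ⟨y, rfl⟩ := hxf
    exact (hΦ y).trans (congrArg f (hφ y fun hy ↦ hx ⟨y, hy, rfl⟩))
  · exact Equiv.Perm.viaEmbedding_apply_of_notMem _ _ x hxf

end ExtendById

section Brown

variable {E : Type*} [NormedAddCommGroup E] {X : Type*} [TopologicalSpace X]

lemma nonempty_homeomorph_of_eqOn_closedBall {F : ℕ → E → X} (hF : ∀ n, IsOpenEmbedding (F n))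
    (hFsucc : ∀ n : ℕ, EqOn (F (n + 1)) (F n) (Metric.closedBall 0 (n + 1)))
    (hFcover : ∀ y, ∃ n : ℕ, y ∈ F n '' Metric.closedBall 0 (n + 1)) :
    Nonempty (X ≃ₜ E) := by
  have hmono {m n : ℕ} (hmn : m ≤ n) : EqOn (F n) (F m) (Metric.closedBall 0 (m + 1)) := by
    induction n, hmn using Nat.le_induction with
    | base => exact eqOn_refl _ _
    | succ n hmn ih =>
      exact ((hFsucc n).mono (Metric.closedBall_subset_closedBall (by gcongr))).trans ih
  let g : E → X := fun x ↦ F ⌈‖x‖⌉₊ x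
  have hg (n : ℕ) : EqOn g (F n) (Metric.closedBall 0 (n + 1)) := fun x hx ↦ by
    obtain h | h := le_total ⌈‖x‖⌉₊ n
    · exact (hmono h (by simpa using (Nat.le_ceil ‖x‖).trans (by linarith))).symm
    · exact hmono h hx
  have hlocal (x : E) : ∃ n, g =ᶠ[𝓝 x] F n := by
    obtain ⟨n, hn⟩ := exists_nat_ge ‖x‖
    exact ⟨n, (hg n).eventuallyEq_of_mem (Metric.closedBall_mem_nhds_of_mem (by simp; linarith))⟩
  have hcont : Continuous g := continuous_iff_continuousAt.mpr fun x ↦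
    let ⟨n, hn⟩ := hlocal x
    (hF n).continuous.continuousAt.congr hn.symm
  have hopen : IsOpenMap g := isOpenMap_iff_nhds_le.mpr fun x ↦ by
    obtain ⟨n, hn⟩ := hlocal x
    rw [map_congr hn, hn.eq_of_nhds, (hF n).map_nhds_eq x]
  have hinj : Function.Injective g := fun x y hxy ↦ by
    obtain ⟨n, hn⟩ := exists_nat_ge (max ‖x‖ ‖y‖)
    rw [max_le_iff] at hn
    rw [hg n (by simp; linarith), hg n (by simp; linarith)] at hxy
    exact (hF n).injective hxy
  have hsurj : Function.Surjective g := fun y ↦ by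
    obtain ⟨n, x, hx, rfl⟩ := hFcover y
    exact ⟨x, hg n hx⟩
  exact ⟨((IsOpenEmbedding.of_continuous_injective_isOpenMap hcont hinj hopen)
    |>.toHomeomorphOfSurjective hsurj).symm⟩

variable [NormedSpace ℝ E]

lemma exists_homeomorph_mapsTo_image_closedBall [ProperSpace E] [T2Space X] {f : E → X}
    (hf : IsOpenEmbedding f) {U : Set X} (hU : U ∈ 𝓝 (f 0)) {r R : ℝ} (hr : 0 < r) (hrR : r < R) :
    ∃ Φ : X ≃ₜ X, Φ =ᶠ[𝓝 (f 0)] id ∧ (∀ x ∉ f '' Metric.closedBall 0 R, Φ x = x) ∧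
      MapsTo Φ (f '' Metric.closedBall 0 r) U := by
  obtain ⟨φ, hφ0, hφR, hφr⟩ :=
    exists_homeomorph_mapsTo_closedBall (hf.continuous.continuousAt hU) hr hrR
  obtain ⟨Φ, hΦ, hΦR⟩ := exists_homeomorph_extend hf φ (isCompact_closedBall 0 R) hφR
  refine ⟨Φ, ?_, hΦR, ?_⟩
  · rw [← hf.map_nhds_eq, EventuallyEq, eventually_map]
    filter_upwards [hφ0] with x hx
    rw [hΦ, hx, id, id]
  · rintro _ ⟨x, hx, rfl⟩
    exact hΦ x ▸ hφr hx

/-- If `θ` shrinks a cell containing `D` and `f (closedBall 0 b)` into `f (ball 0 b)`, fixing a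
neighborhood of `f 0`, and `η` shrinks `f (closedBall 0 a)` into that neighborhood, the new cell is
`η⁻¹ ∘ θ⁻¹ ∘ η ∘ f`. -/
lemma exists_isOpenEmbedding_eqOn_subset_image [ProperSpace E] [T2Space X]
    (hX : ∀ C : Set X, IsCompact C → ∃ h : E → X, IsOpenEmbedding h ∧ C ⊆ range h)
    {f : E → X} (hf : IsOpenEmbedding f) {a b : ℝ} (ha : 0 < a) (hab : a < b) {D : Set X}
    (hD : IsCompact D) :
    ∃ f' : E → X, IsOpenEmbedding f' ∧ EqOn f' f (Metric.closedBall 0 a) ∧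
      D ⊆ f' '' Metric.closedBall 0 b := by
  set C := f '' Metric.closedBall 0 b ∪ D
  have hC : IsCompact C := ((isCompact_closedBall 0 b).image hf.continuous).union hD
  have hf0b : f 0 ∈ f '' Metric.ball 0 b := mem_image_of_mem f (by simpa using ha.trans hab)
  obtain ⟨h, hh, hh0, hCh⟩ : ∃ h : E → X, IsOpenEmbedding h ∧ h 0 = f 0 ∧ C ⊆ range h := by
    obtain ⟨h, hh, hCh⟩ := hX C hC
    obtain ⟨x₀, hx₀⟩ := hCh (.inl (image_mono Metric.ball_subset_closedBall hf0b))
    refine ⟨h ∘ Homeomorph.addRight x₀, hh.comp (Homeomorph.isOpenEmbedding _), by simpa, ?_⟩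
    rwa [(Homeomorph.addRight x₀).surjective.range_comp]
  obtain ⟨r, hr, hCr⟩ : ∃ r > 0, C ⊆ h '' Metric.closedBall 0 r := by
    obtain ⟨r, hr⟩ := (hh.isInducing.isCompact_preimage' hC hCh).isBounded.subset_closedBall 0
    refine ⟨max r 1, by positivity, fun y hy ↦ ?_⟩
    obtain ⟨x, rfl⟩ := hCh hy
    exact ⟨x, Metric.closedBall_subset_closedBall (le_max_left _ _) (hr hy), rfl⟩
  obtain ⟨θ, hθ0, -, hθr⟩ := exists_homeomorph_mapsTo_image_closedBall hh
    (hh0 ▸ (hf.isOpenMap _ Metric.isOpen_ball).mem_nhds hf0b) hr (lt_add_one r)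
  obtain ⟨η, -, hηb, hηa⟩ := exists_homeomorph_mapsTo_image_closedBall hf (hh0 ▸ hθ0) ha hab
  refine ⟨fun x ↦ η.symm (θ.symm (η (f x))), η.symm.isOpenEmbedding.comp
    (θ.symm.isOpenEmbedding.comp (η.isOpenEmbedding.comp hf)), fun x hx ↦ ?_, fun y hy ↦ ?_⟩
  · have hθx : θ (η (f x)) = η (f x) := hηa (mem_image_of_mem f hx)
    simp only [Homeomorph.symm_apply_eq, hθx]
  · have hηC : η y ∈ C := by
      by_contra hηy
      have hηy' : η (η y) = η y := hηb _ fun h ↦ hηy (.inl h)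
      exact hηy (.inr (by rwa [η.injective hηy']))
    obtain ⟨x, hx, hxy⟩ : η.symm (θ (η y)) ∈ f '' Metric.closedBall 0 b := by
      by_contra hz
      refine hz (image_mono Metric.ball_subset_closedBall ?_)
      have hηz := hηb _ hz
      rw [η.apply_symm_apply] at hηz
      exact hηz ▸ hθr (hCr hηC)
    exact ⟨x, hx, by simp [hxy]⟩

/-- M. Brown, *The monotone union of open n-cells is an open n-cell* (1961). -/
theorem nonempty_homeomorph_of_compact_subset_range [ProperSpace E] [T2Space X]
    [SigmaCompactSpace X]
    (hX : ∀ C : Set X, IsCompact C → ∃ h : E → X, IsOpenEmbedding h ∧ C ⊆ range h) :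
    Nonempty (X ≃ₜ E) := by
  obtain ⟨f₀, hf₀, -⟩ := hX ∅ isCompact_empty
  have hstep (n : ℕ) (f : {f : E → X // IsOpenEmbedding f}) :
      ∃ f' : {f : E → X // IsOpenEmbedding f}, EqOn f'.1 f.1 (Metric.closedBall 0 (n + 1)) ∧
        compactCovering X n ⊆ f'.1 '' Metric.closedBall 0 (n + 2) := by
    obtain ⟨f', hf', h⟩ := exists_isOpenEmbedding_eqOn_subset_image hX f.2
      (a := n + 1) (b := n + 2) (by positivity) (by linarith) (isCompact_compactCovering X n)
    exact ⟨⟨f', hf'⟩, h⟩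
  choose next hnext using hstep
  let F : ℕ → {f : E → X // IsOpenEmbedding f} := fun n ↦ Nat.rec ⟨f₀, hf₀⟩ next n
  refine nonempty_homeomorph_of_eqOn_closedBall (fun n ↦ (F n).2)
    (fun n ↦ (hnext n (F n)).1) fun y ↦ ?_
  obtain ⟨n, hn⟩ := mem_iUnion.mp (iUnion_compactCovering X ▸ mem_univ y)
  refine ⟨n + 1, ?_⟩
  have := (hnext n (F n)).2 hn
  push_cast
  rwa [add_assoc, one_add_one_eq_two]

end Brown

/-! ### The telescope of a self-map -/

section Telescope

universe u

variable {T : Type u}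

/-- Two points of the stages `n` and `m` are identified when some common iterate of `h` carries
them to the same point of a later stage. -/
def telescopeSetoid (h : T → T) : Setoid (ℕ × T) where
  r a b := ∃ k, h^[k + b.1] a.2 = h^[k + a.1] b.2
  iseqv := by
    refine ⟨fun _ ↦ ⟨0, rfl⟩, fun ⟨k, hk⟩ ↦ ⟨k, hk.symm⟩, ?_⟩
    rintro ⟨n, x⟩ ⟨m, y⟩ ⟨l, z⟩ ⟨k, hxy⟩ ⟨k', hyz⟩
    refine ⟨k + k' + m, ?_⟩
    calc h^[k + k' + m + l] x = h^[k' + l] (h^[k + m] x) := by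
          rw [← Function.iterate_add_apply]; exact congrArg (h^[·] x) (by lia)
      _ = h^[k + n] (h^[k' + l] y) := by
          rw [hxy, ← Function.iterate_add_apply, ← Function.iterate_add_apply, add_comm]
      _ = h^[k + k' + m + n] z := by
          rw [hyz, ← Function.iterate_add_apply]; exact congrArg (h^[·] z) (by lia)

/-- The *telescope* of `h`: the direct limit of the sequence `T → T → T → ⋯` all of whose maps
are `h`. -/
def Telescope (h : T → T) : Type u := Quotient (telescopeSetoid h)

namespace Telescope

variable {h : T → T}

/-- The map from the `n`-th stage to the telescope. -/
def of (h : T → T) (n : ℕ) (x : T) : Telescope h :=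
  Quotient.mk (telescopeSetoid h) (n, x)

lemma of_eq_of_iff (hi : h.Injective) {n m : ℕ} {x y : T} :
    of h n x = of h m y ↔ h^[m] x = h^[n] y := by
  refine (Quotient.eq (r := telescopeSetoid h)).trans ⟨fun ⟨k, hk⟩ ↦ hi.iterate k ?_,
    fun hxy ↦ ⟨0, by simpa using hxy⟩⟩
  simpa only [Function.iterate_add_apply] using hk

lemma of_add (n k : ℕ) (x : T) : of h (n + k) (h^[k] x) = of h n x :=
  Quotient.sound ⟨0, by simp [← Function.iterate_add_apply]⟩

lemma of_succ (n : ℕ) (x : T) : of h (n + 1) (h x) = of h n x := of_add n 1 x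

lemma of_of_le {m n : ℕ} (hmn : m ≤ n) (x : T) : of h n (h^[n - m] x) = of h m x := by
  obtain ⟨k, rfl⟩ := Nat.exists_eq_add_of_le hmn
  rw [Nat.add_sub_cancel_left, of_add]

lemma exists_of (p : Telescope h) : ∃ n x, of h n x = p :=
  let ⟨⟨n, x⟩, hp⟩ := Quotient.exists_rep p
  ⟨n, x, hp⟩

lemma of_injective (hi : h.Injective) (n : ℕ) : (of h n).Injective := fun _ _ hxy ↦
  hi.iterate n ((of_eq_of_iff hi).mp hxy)

variable [TopologicalSpace T]

instance : TopologicalSpace (Telescope h) :=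
  inferInstanceAs (TopologicalSpace (Quotient (telescopeSetoid h)))

lemma isOpenEmbedding_iterate (ho : IsOpenEmbedding h) (n : ℕ) : IsOpenEmbedding h^[n] := by
  induction n with
  | zero => exact .id
  | succ n ih => exact ih.comp ho

lemma isOpenMap_mk (ho : IsOpenEmbedding h) : IsOpenMap (Quotient.mk (telescopeSetoid h)) := by
  intro U hU
  have hpre : Quotient.mk (telescopeSetoid h) ⁻¹' (Quotient.mk (telescopeSetoid h) '' U) =
      ⋃ (n : ℕ) (m : ℕ), {m} ×ˢ (h^[n] ⁻¹' (h^[m] '' ((fun x ↦ (n, x)) ⁻¹' U))) := by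
    ext ⟨m, y⟩
    simp only [mem_preimage, mem_image, mem_iUnion, mem_prod, mem_singleton_iff, Prod.exists]
    constructor
    · rintro ⟨n, x, hx, hxy⟩
      exact ⟨n, m, rfl, x, hx, (of_eq_of_iff ho.injective).mp hxy⟩
    · rintro ⟨n, _, rfl, x, hx, hxy⟩
      exact ⟨n, x, hx, (of_eq_of_iff ho.injective).mpr hxy⟩
  refine isQuotientMap_quotient_mk'.isOpen_preimage.mp (hpre ▸ ?_)
  refine isOpen_iUnion fun n ↦ isOpen_iUnion fun m ↦ (isOpen_discrete _).prod
    (((isOpenEmbedding_iterate ho m).isOpenMap _ ?_).preimage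
      (isOpenEmbedding_iterate ho n).continuous)
  exact hU.preimage (by fun_prop)

lemma isOpenEmbedding_of (ho : IsOpenEmbedding h) (n : ℕ) : IsOpenEmbedding (of h n) :=
  .of_continuous_injective_isOpenMap (continuous_quotient_mk'.comp (by fun_prop))
    (of_injective ho.injective n) ((isOpenMap_mk ho).comp fun U hU ↦ by
      simpa only [singleton_prod] using (isOpen_discrete {n}).prod hU)

lemma t2Space [T2Space T] (ho : IsOpenEmbedding h) : T2Space (Telescope h) := by
  refine ⟨fun p q hpq ↦ ?_⟩
  obtain ⟨n, x, rfl⟩ := p.exists_of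
  obtain ⟨m, y, rfl⟩ := q.exists_of
  rw [← of_of_le (le_max_left n m) x, ← of_of_le (le_max_right n m) y] at hpq ⊢
  obtain ⟨U, V, hU, hV, hxU, hyV, hUV⟩ := t2_separation (ne_of_apply_ne _ hpq)
  exact ⟨_, _, (isOpenEmbedding_of ho _).isOpenMap U hU, (isOpenEmbedding_of ho _).isOpenMap V hV,
    mem_image_of_mem _ hxU, mem_image_of_mem _ hyV,
    (disjoint_image_iff (of_injective ho.injective _)).mpr hUV⟩

lemma secondCountableTopology [SecondCountableTopology T] (ho : IsOpenEmbedding h) :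
    SecondCountableTopology (Telescope h) :=
  isQuotientMap_quotient_mk'.secondCountableTopology (isOpenMap_mk ho)

instance [SigmaCompactSpace T] : SigmaCompactSpace (Telescope h) := by
  have hrange : range (Quotient.mk (telescopeSetoid h)) = univ := Quotient.mk_surjective.range_eq
  exact isSigmaCompact_univ_iff.mp (hrange ▸ isSigmaCompact_range continuous_quotient_mk')

lemma exists_isOpenEmbedding {E : Type*} [TopologicalSpace E]
    (hT : ∀ x : T, ∃ f : E → T, IsOpenEmbedding f ∧ x ∈ range f) (ho : IsOpenEmbedding h)
    (p : Telescope h) : ∃ f : E → Telescope h, IsOpenEmbedding f ∧ p ∈ range f := by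
  obtain ⟨n, x, rfl⟩ := p.exists_of
  obtain ⟨f, hf, y, hy⟩ := hT x
  exact ⟨of h n ∘ f, (isOpenEmbedding_of ho n).comp hf, y, by simp [hy]⟩

lemma exists_subset_image_of {U : Set T} (hU : IsOpen U) (hhU : range h ⊆ U)
    (ho : IsOpenEmbedding h) {C : Set (Telescope h)} (hC : IsCompact C) :
    ∃ n, C ⊆ of h n '' U := by
  refine hC.elim_directed_cover (fun n ↦ of h n '' U)
    (fun n ↦ (isOpenEmbedding_of ho n).isOpenMap _ hU) ?_ ?_
  · intro p _
    obtain ⟨n, x, rfl⟩ := p.exists_of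
    exact mem_iUnion.mpr ⟨n + 1, h x, hhU (mem_range_self x), of_succ n x⟩
  · refine (monotone_nat_of_le_succ fun n ↦ ?_).directed_le
    rintro _ ⟨x, -, rfl⟩
    exact ⟨h x, hhU (mem_range_self x), of_succ n x⟩

end Telescope

/-- The charted space structure whose charts are the inverses of open embeddings of the model. -/
@[reducible] noncomputable def chartedSpaceOfIsOpenEmbedding {E X : Type*} [TopologicalSpace E]
    [Nonempty E] [TopologicalSpace X]
    (hX : ∀ p : X, ∃ f : E → X, IsOpenEmbedding f ∧ p ∈ range f) : ChartedSpace E X where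
  atlas := univ
  chartAt p := ((hX p).choose_spec.1.toOpenPartialHomeomorph _).symm
  mem_chart_source p := by simpa using (hX p).choose_spec.2
  chart_mem_atlas _ := trivial

end Telescope

/-! ### Telescopes of null-homotopic self-embeddings of a solid torus -/

section SolidTorus

lemma exists_continuousMap_comp_eqOn {X : Type*} [TopologicalSpace X] [T4Space X] {h : X → X}
    (hh : Continuous h) (hi : h.Injective) {K : Set X} (hK : IsCompact K) {f : X → ℝ}
    (hf : Continuous f) : ∃ V : C(X, ℝ), EqOn (V ∘ h) f K := by
  have : CompactSpace K := isCompact_iff_compactSpace.mp hK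
  have hce : IsClosedEmbedding fun p : K ↦ h p :=
    (hh.comp continuous_subtype_val).isClosedEmbedding (hi.comp Subtype.val_injective)
  obtain ⟨V, hV⟩ := ContinuousMap.exists_extension' hce
    ⟨fun p ↦ f p, hf.comp continuous_subtype_val⟩
  exact ⟨V, fun p hp ↦ congrFun hV ⟨p, hp⟩⟩

/-- The homeomorphism `(x, g) ↦ (x, g + f x)`. -/
def shearHomeomorph {X G : Type*} [TopologicalSpace X] [TopologicalSpace G] [AddGroup G]
    [IsTopologicalAddGroup G] (f : C(X, G)) : X × G ≃ₜ X × G where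
  toEquiv := (Equiv.refl X).prodShear fun x ↦ Equiv.addRight (f x)
  continuous_toFun := by
    change Continuous fun p : X × G ↦ (p.1, p.2 + f p.1)
    fun_prop
  continuous_invFun := by
    change Continuous fun p : X × G ↦ (p.1, p.2 + -f p.1)
    fun_prop

@[simp]
lemma shearHomeomorph_apply {X G : Type*} [TopologicalSpace X] [TopologicalSpace G] [AddGroup G]
    [IsTopologicalAddGroup G] (f : C(X, G)) (p : X × G) :
    shearHomeomorph f p = (p.1, p.2 + f p.1) := rfl

variable {L : ℝ} [hL : Fact (0 < L)]

lemma exists_isOpenEmbedding_addCircle : ∃ ψ : ℝ → AddCircle L, IsOpenEmbedding ψ ∧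
    ∀ t : ℝ, |t| < L / 2 → (t : AddCircle L) ∈ range ψ := by
  set b := OpenPartialHomeomorph.univBall (0 : ℝ) (L / 2)
  set e := AddCircle.openPartialHomeomorphCoe L (-(L / 2))
  have hb : b.target = e.source := by
    rw [OpenPartialHomeomorph.univBall_target _ (half_pos hL.out), Real.ball_eq_Ioo]
    simp [e]; ring_nf
  refine ⟨b.trans' e hb, (b.trans' e hb).isOpenEmbedding (by simp [b]), fun t ht ↦ ?_⟩
  have htb : t ∈ b.target := by
    rwa [OpenPartialHomeomorph.univBall_target _ (half_pos hL.out), mem_ball_zero_iff]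
  exact ⟨b.symm t, by simp [e, b.right_inv htb]⟩

lemma exists_isOpenEmbedding_solidTorus {F : Type*} [TopologicalSpace F]
    (p : AddCircle L × F) :
    ∃ f : ℝ × F → AddCircle L × F, IsOpenEmbedding f ∧ p ∈ range f := by
  obtain ⟨ψ, hψ, hr⟩ := exists_isOpenEmbedding_addCircle (L := L)
  obtain ⟨s, hs⟩ := hr 0 (by simpa using hL.out)
  exact ⟨Prod.map (p.1 + ψ ·) id, ((Homeomorph.addLeft p.1).isOpenEmbedding.comp hψ).prodMap .id,
    (s, p.2), by simp [hs]⟩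

variable {F : Type*} [NormedAddCommGroup F]

/-- The cell is the product of an arc with `F × ℝ`, first made to wind around the circle at the
speed `1 / K` and then sheared by `V`. -/
lemma exists_slanted_cell (V : C(AddCircle L × F, ℝ)) {K : ℝ} (hK : 0 < K) :
    ∃ f : (ℝ × F) × ℝ → (AddCircle L × F) × ℝ, IsOpenEmbedding f ∧
      ∀ (x : ℝ) (z : F) (t : ℝ), V ((x : AddCircle L), z) = K * x → |t| < K * (L / 2) →
        (((x : AddCircle L), z), t) ∈ range f := by
  obtain ⟨ψ, hψ, hr⟩ := exists_isOpenEmbedding_addCircle (L := L)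
  let wind : C(F × ℝ, AddCircle L) := ⟨fun q ↦ ((q.2 / K : ℝ) : AddCircle L),
    (AddCircle.continuous_mk' L).comp (by fun_prop)⟩
  let e : (ℝ × F) × ℝ ≃ₜ (F × ℝ) × ℝ := (Homeomorph.prodAssoc _ _ _).trans (.prodComm _ _)
  let e' : (F × ℝ) × AddCircle L ≃ₜ (AddCircle L × F) × ℝ :=
    (Homeomorph.prodComm _ _).trans (Homeomorph.prodAssoc _ _ _).symm
  refine ⟨shearHomeomorph (-V) ∘ e' ∘ shearHomeomorph wind ∘ Prod.map id ψ ∘ e,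
    (Homeomorph.isOpenEmbedding _).comp (e'.isOpenEmbedding.comp
      ((Homeomorph.isOpenEmbedding _).comp ((IsOpenEmbedding.id.prodMap hψ).comp
        e.isOpenEmbedding))), fun x z t hV ht ↦ ?_⟩
  obtain ⟨u, hu⟩ := hr (-(t / K)) (by
    rwa [abs_neg, abs_div, abs_of_pos hK, div_lt_iff₀' hK])
  have hwind : ψ u + (((t + K * x) / K : ℝ) : AddCircle L) = x := by
    rw [hu, ← AddCircle.coe_add]
    congr 1
    field_simp
    ring
  refine ⟨((u, z), t + K * x), ?_⟩
  change shearHomeomorph (-V) ((ψ u + (((t + K * x) / K : ℝ) : AddCircle L), z), t + K * x) = _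
  simp [hwind, hV]

namespace Telescope

variable [ProperSpace F] {h : AddCircle L × F → AddCircle L × F}

lemma exists_isOpenEmbedding_prod_real (ho : IsOpenEmbedding h) {r : ℝ}
    (hr : ∀ p, ‖(h p).2‖ < r) {X : AddCircle L × F → ℝ} (hX : Continuous X)
    (hXh : ∀ p, (h p).1 = (X p : AddCircle L)) {C : Set (Telescope h × ℝ)} (hC : IsCompact C) :
    ∃ f : (ℝ × F) × ℝ → Telescope h × ℝ, IsOpenEmbedding f ∧ C ⊆ range f := by
  obtain ⟨n, hn⟩ := exists_subset_image_of (h := h) (U := {p | ‖p.2‖ < r})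
    (isOpen_lt (by fun_prop) continuous_const) (range_subset_iff.mpr hr) ho
    (hC.image continuous_fst)
  obtain ⟨s, hs0, hs⟩ := (hC.image continuous_snd).isBounded.exists_pos_norm_lt
  obtain ⟨K, hK, hsK⟩ : ∃ K > 0, s = K * (L / 2) := by
    have := hL.out
    exact ⟨s / (L / 2), by positivity, by field_simp⟩
  obtain ⟨V, hV⟩ := exists_continuousMap_comp_eqOn ho.continuous ho.injective
    (isCompact_univ.prod (isCompact_closedBall (0 : F) r)) (f := fun p ↦ K * X p) (by fun_prop)
  obtain ⟨f, hf, hfr⟩ := exists_slanted_cell V hK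
  refine ⟨Prod.map (of h (n + 1)) id ∘ f, ((isOpenEmbedding_of ho _).prodMap .id).comp hf, ?_⟩
  rintro ⟨p, t⟩ hp
  obtain ⟨x, hx, rfl⟩ := hn ⟨_, hp, rfl⟩
  have hhx : h x = ((X x : AddCircle L), (h x).2) := Prod.ext (hXh x) rfl
  obtain ⟨q, hq⟩ := hfr (X x) (h x).2 t
    (hhx ▸ hV (mk_mem_prod (mem_univ _) (mem_closedBall_zero_iff.mpr (le_of_lt hx))))
    (hsK ▸ hs _ ⟨_, hp, rfl⟩)
  exact ⟨q, by rw [Function.comp_apply, hq, ← hhx, Prod.map_apply, of_succ, id]⟩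

theorem nonempty_prod_real_homeomorph [NormedSpace ℝ F] (ho : IsOpenEmbedding h) {r : ℝ}
    (hr : ∀ p, ‖(h p).2‖ < r) {X : AddCircle L × F → ℝ} (hX : Continuous X)
    (hXh : ∀ p, (h p).1 = (X p : AddCircle L)) :
    Nonempty ((Telescope h × ℝ) ≃ₜ (ℝ × F) × ℝ) := by
  have := t2Space ho
  exact nonempty_homeomorph_of_compact_subset_range fun _ ↦
    exists_isOpenEmbedding_prod_real ho hr hX hXh

end Telescope

end SolidTorus

/-! ### Simple connectivity at infinity -/

section SimplyConnectedAtInfinity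

lemma SimplyConnectedAtInfinity.of_homeomorph {X Y : Type*} [TopologicalSpace X]
    [TopologicalSpace Y] (hY : SimplyConnectedAtInfinity Y) (e : X ≃ₜ Y) :
    SimplyConnectedAtInfinity X := by
  intro k hk
  obtain ⟨K, hK, hkK, h⟩ := hY (e '' k) (hk.image e.continuous)
  refine ⟨e ⁻¹' K, e.isCompact_preimage.mpr hK, image_subset_iff.mp hkK, fun γ hγ hγK ↦ ?_⟩
  obtain ⟨H, hH, hHk, hHγ⟩ := h (e ∘ γ) (e.continuous.comp hγ) hγK
  exact ⟨e.symm ∘ H, e.symm.continuous.comp hH, fun z hz ↦ hHk z ⟨_, hz, by simp⟩,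
    fun z hz ↦ by simp [hHγ z hz]⟩

variable {E : Type*} [NormedAddCommGroup E] [NormedSpace ℝ E]

/-- The map moving the points of the ball of radius `ρ` about `v`, except `v` itself, radially
away from `v` onto its boundary sphere. -/
noncomputable def pushOut (v : E) (ρ : ℝ) (x : E) : E :=
  v + max 1 (ρ / ‖x - v‖) • (x - v)

lemma continuousOn_pushOut (v : E) (ρ : ℝ) : ContinuousOn (pushOut v ρ) {v}ᶜ := by
  have : ContinuousOn (fun x ↦ ρ / ‖x - v‖) {v}ᶜ := continuousOn_const.div (by fun_prop)
    fun x hx ↦ norm_ne_zero_iff.mpr (sub_ne_zero.mpr hx)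
  unfold pushOut
  fun_prop

lemma le_dist_pushOut {v x : E} (ρ : ℝ) (hx : x ≠ v) : ρ ≤ dist (pushOut v ρ x) v := by
  have hx0 : 0 < ‖x - v‖ := norm_pos_iff.mpr (sub_ne_zero.mpr hx)
  rw [pushOut, dist_self_add_left, norm_smul, Real.norm_of_nonneg (by positivity),
    ← div_le_iff₀ hx0]
  exact le_max_right _ _

lemma pushOut_eq_self {v x : E} {ρ : ℝ} (hρ : 0 < ρ) (hx : ρ ≤ dist x v) :
    pushOut v ρ x = x := by
  rw [dist_eq_norm] at hx
  rw [pushOut, max_eq_left ((div_le_one (hρ.trans_le hx)).mpr hx), one_smul, add_sub_cancel]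

variable {V : Type*} [NormedAddCommGroup V] [NormedSpace ℝ V] [FiniteDimensional ℝ V]
  [FiniteDimensional ℝ E]

/-- Where `f` is small it is replaced by a smooth approximation, whose range has dense
complement. -/
lemma exists_continuous_eq_of_two_le_norm_forall_ne
    (hdim : Module.finrank ℝ V < Module.finrank ℝ E) {f : V → E} (hf : Continuous f) :
    ∃ g : V → E, Continuous g ∧ (∀ p, 2 ≤ ‖f p‖ → g p = f p) ∧
      ∃ v, ‖v‖ < 1 / 4 ∧ ∀ p, g p ≠ v := by
  obtain ⟨f', hf', hff', -⟩ := hf.exists_contDiff_approx 1 (ε := fun _ ↦ 1 / 2)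
    continuous_const fun _ ↦ by norm_num
  obtain ⟨v, hv, hv4⟩ := (hf'.dense_compl_range_of_finrank_lt_finrank hdim).exists_dist_lt 0
    (show (0 : ℝ) < 1 / 4 by norm_num)
  rw [dist_zero_left] at hv4
  set χ : V → ℝ := fun p ↦ max 0 (min 1 (2 - ‖f p‖))
  have hχ {p} : 0 ≤ χ p ∧ χ p ≤ 1 := ⟨le_max_left _ _, max_le zero_le_one (min_le_left _ _)⟩
  refine ⟨fun p ↦ f p + χ p • (f' p - f p), ?_, fun p hp ↦ ?_, v, hv4, fun p hp ↦ ?_⟩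
  · have := hf'.continuous
    fun_prop
  · have : χ p = 0 := max_eq_left ((min_le_right _ _).trans (by linarith))
    simp only [this, zero_smul, add_zero]
  obtain hp1 | hp1 := le_or_gt ‖f p‖ 1
  · have : χ p = 1 := le_antisymm hχ.2 (le_max_of_le_right (le_min le_rfl (by linarith)))
    simp only [this, one_smul, add_sub_cancel] at hp
    exact hv ⟨p, hp⟩
  · have hclose : ‖χ p • (f' p - f p)‖ ≤ 1 / 2 := by
      rw [norm_smul, Real.norm_of_nonneg hχ.1, ← dist_eq_norm]
      exact (mul_le_of_le_one_left dist_nonneg hχ.2).trans (hff' p).le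
    have : ‖f p‖ ≤ ‖v‖ + ‖χ p • (f' p - f p)‖ := by
      rw [← hp]
      simpa using norm_sub_le (f p + χ p • (f' p - f p)) (χ p • (f' p - f p))
    linarith

/-- A loop far from the origin is extended to a map of the plane missing some point `v` near the
origin, and that map is then pushed away from `v`. -/
theorem simplyConnectedAtInfinity_of_two_lt_finrank (hdim : 2 < Module.finrank ℝ E) :
    SimplyConnectedAtInfinity E := by
  intro k hk
  obtain ⟨R, hR0, hR⟩ := hk.isBounded.exists_pos_norm_le
  have hkR : k ⊆ Metric.closedBall 0 (R + 2) := fun x hx ↦ by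
    rw [mem_closedBall_zero_iff]; linarith [hR x hx]
  have := FiniteDimensional.proper_real E
  refine ⟨_, isCompact_closedBall _ _, hkR, fun γ hγ hγR ↦ ?_⟩
  simp only [mem_closedBall_zero_iff, not_le] at hγR
  have : TietzeExtension E := .of_tvs ℝ
  obtain ⟨f, hfγ⟩ := ContinuousMap.exists_extension' (Y := E)
    Metric.isClosed_sphere.isClosedEmbedding_subtypeVal ⟨γ, hγ⟩
  obtain ⟨g, hg, hgf, v, hv, hgv⟩ := exists_continuous_eq_of_two_le_norm_forall_ne
    (by simpa using hdim) f.continuous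
  have hgγ {z} (hz) : g z = γ ⟨z, hz⟩ := by
    have hfz : f z = γ ⟨z, hz⟩ := congrFun hfγ ⟨z, hz⟩
    rw [hgf z (hfz ▸ by linarith [hγR ⟨z, hz⟩]), hfz]
  refine ⟨fun z ↦ pushOut v (R + 1) (g z),
    (continuousOn_pushOut v _).comp_continuous (by fun_prop) fun z ↦ hgv z, fun z hz ↦ ?_,
    fun z hz ↦ ?_⟩
  · have hfar := le_dist_pushOut (R + 1) (hgv z)
    rw [dist_eq_norm] at hfar
    linarith [hR _ hz, norm_sub_le (pushOut v (R + 1) (g z)) v]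
  · simp only [hgγ hz]
    refine pushOut_eq_self (by linarith) ?_
    rw [dist_eq_norm]
    linarith [hγR ⟨z, hz⟩, norm_le_norm_sub_add (γ ⟨z, hz⟩) v]

end SimplyConnectedAtInfinity

/-! ### Whitehead's self-embedding of the solid torus -/

@[fun_prop]
lemma continuous_complex_mk {X : Type*} [TopologicalSpace X] {f g : X → ℝ}
    (hf : Continuous f) (hg : Continuous g) : Continuous fun x ↦ (⟨f x, g x⟩ : ℂ) :=
  Complex.equivRealProdCLM.symm.continuous.comp (hf.prodMk hg)

namespace Whitehead

/-- The period of the circle factor of the solid torus. It is shorter than the clasped curve drawn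
along it, which is why neighbouring lifts of that curve hook into each other. -/
noncomputable def period : ℝ := 3 / 2

lemma period_eq : period = 3 / 2 := rfl

instance : Fact (0 < period) := ⟨by norm_num [period_eq]⟩

lemma period_ne_zero : period ≠ 0 := (Fact.out : 0 < period).ne'

/-- The open solid torus. -/
abbrev SolidTorus : Type := AddCircle period × ℂ

/-- The universal covering of the solid torus. -/
noncomputable def proj (P : ℝ × ℂ) : SolidTorus := ((P.1 : AddCircle period), P.2)

lemma continuous_proj : Continuous proj :=
  (AddCircle.continuous_mk' period).prodMap continuous_id

lemma isOpenMap_proj : IsOpenMap proj :=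
  (QuotientAddGroup.isOpenMap_coe (N := AddSubgroup.zmultiples period)).prodMap .id

lemma surjective_proj : Function.Surjective proj :=
  QuotientAddGroup.mk_surjective.prodMap Function.surjective_id

/-- An embedding of the plane in a small disk about the origin. -/
noncomputable def squash (w : ℂ) : ℂ := (1 / 100 : ℝ) • (OpenPartialHomeomorph.univUnitBall w : ℂ)

lemma isOpenEmbedding_squash : IsOpenEmbedding squash :=
  (Homeomorph.smulOfNeZero (1 / 100 : ℝ) (by norm_num) : ℂ ≃ₜ ℂ).isOpenEmbedding.comp
    (OpenPartialHomeomorph.univUnitBall.isOpenEmbedding rfl)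

lemma continuous_squash : Continuous squash := isOpenEmbedding_squash.continuous

lemma squash_apply (w : ℂ) : squash w = (((1 / 100) * (√(1 + ‖w‖ ^ 2))⁻¹ : ℝ) : ℂ) * w := by
  simp [squash, OpenPartialHomeomorph.univUnitBall_apply, mul_assoc]

lemma norm_squash_lt (w : ℂ) : ‖squash w‖ < 1 / 100 := by
  have hball : ‖(OpenPartialHomeomorph.univUnitBall w : ℂ)‖ < 1 :=
    mem_ball_zero_iff.mp (OpenPartialHomeomorph.univUnitBall.map_source (mem_univ w))
  rw [squash, norm_smul, Real.norm_of_nonneg (by norm_num)]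
  linarith

lemma abs_squash_im_lt (w : ℂ) : |(squash w).im| < 1 / 100 :=
  (Complex.abs_im_le_norm _).trans_lt (norm_squash_lt w)

lemma exp_squash_re_mem_Ioo (w : ℂ) : Real.exp (squash w).re ∈ Ioo (98 / 100 : ℝ) (102 / 100) := by
  have hre : |(squash w).re| < 1 / 100 := (Complex.abs_re_le_norm _).trans_lt (norm_squash_lt w)
  have := abs_le.mp (Real.abs_exp_sub_one_le (x := (squash w).re) (by linarith))
  constructor <;> linarith

/-- The annulus coordinate of the embedding: the circle factor runs around the unit circle of
the plane, and the real part of the squashed disk factor thickens it radially. -/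
noncomputable def annulus (p : SolidTorus) : ℂ :=
  (Real.exp (squash p.2).re : ℂ) * (AddCircle.toCircle p.1 : ℂ)

lemma continuous_annulus : Continuous annulus := by
  have hcircle : Continuous fun p : SolidTorus ↦ (AddCircle.toCircle p.1 : ℂ) :=
    continuous_subtype_val.comp (AddCircle.continuous_toCircle.comp continuous_fst)
  have hsquash : Continuous fun p : SolidTorus ↦ squash p.2 := continuous_squash.comp continuous_snd
  exact (Complex.continuous_ofReal.comp
    (Real.continuous_exp.comp (Complex.continuous_re.comp hsquash))).mul hcircle

lemma annulus_proj (P : ℝ × ℂ) :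
    annulus (proj P) = Complex.exp ⟨(squash P.2).re, 2 * Real.pi / period * P.1⟩ := by
  rw [Complex.mk_eq_add_mul_I, annulus, proj, AddCircle.toCircle_apply_mk, Circle.coe_exp,
    Complex.exp_add, Complex.ofReal_exp]

lemma norm_annulus (p : SolidTorus) : ‖annulus p‖ = Real.exp (squash p.2).re := by
  rw [annulus, norm_mul, Circle.norm_coe, mul_one, Complex.norm_real, Real.norm_of_nonneg
    (Real.exp_nonneg _)]

lemma annulus_sq_mem_Ioo (p : SolidTorus) :
    (annulus p).re ^ 2 + (annulus p).im ^ 2 ∈ Ioo (96 / 100 : ℝ) (105 / 100) := by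
  obtain ⟨h₁, h₂⟩ := exp_squash_re_mem_Ioo p.2
  have : (annulus p).re ^ 2 + (annulus p).im ^ 2 = Real.exp (squash p.2).re ^ 2 := by
    rw [← norm_annulus, ← Complex.normSq_eq_norm_sq, Complex.normSq_apply]; ring
  rw [this]
  constructor <;> nlinarith

/-- Bends the product of the plane with a line into the covering space, in such a way that the unit
circle of the plane becomes a curve hooked into its translates by the period. -/
def clasp : ℂ × ℝ ≃ₜ ℝ × ℂ where
  toFun q := (q.1.re, ⟨q.1.im, q.1.re * q.1.im + q.2⟩)
  invFun P := (⟨P.1, P.2.re⟩, P.2.im - P.1 * P.2.re)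
  left_inv q := by ext <;> simp
  right_inv P := by ext <;> simp
  continuous_toFun := by fun_prop
  continuous_invFun := by fun_prop

/-- The lift of Whitehead's self-embedding to the universal covering. Since it is defined on the
solid torus itself, the self-embedding is null-homotopic. -/
noncomputable def lift (p : SolidTorus) : ℝ × ℂ := clasp (annulus p, (squash p.2).im)

/-- Whitehead's self-embedding of the solid torus. -/
noncomputable def embedding (p : SolidTorus) : SolidTorus := proj (lift p)

lemma continuous_lift : Continuous lift :=
  clasp.continuous.comp (continuous_annulus.prodMk
    (Complex.continuous_im.comp (continuous_squash.comp continuous_snd)))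

lemma continuous_embedding : Continuous embedding := continuous_proj.comp continuous_lift

lemma lift_injective : Function.Injective lift := by
  intro p p' hpp
  obtain ⟨hann, him⟩ := Prod.mk.inj (clasp.injective hpp)
  have hexp : Real.exp (squash p.2).re = Real.exp (squash p'.2).re := by
    rw [← norm_annulus, hann, norm_annulus]
  have hw : p.2 = p'.2 :=
    isOpenEmbedding_squash.injective (Complex.ext (Real.exp_injective hexp) him)
  have hθ : (AddCircle.toCircle p.1 : ℂ) = AddCircle.toCircle p'.1 := by
    rw [annulus, annulus, hexp] at hann
    exact mul_left_cancel₀ (by exact_mod_cast (Real.exp_pos _).ne') hann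
  exact Prod.ext (AddCircle.injective_toCircle period_ne_zero (Circle.ext hθ)) hw

/-- The action of an integer on the universal covering by a deck transformation. -/
noncomputable def translate (k : ℤ) (P : ℝ × ℂ) : ℝ × ℂ := (P.1 + k * period, P.2)

/-- Two points of the thickened curve which differ by a translation must have planar coordinates
near `±3/4` and `0`, but such points are too close to the origin. -/
lemma lift_ne_translate (p p' : SolidTorus) : lift p' ≠ translate 1 (lift p) := by
  intro h
  have hre : (annulus p').re = (annulus p).re + 3 / 2 := by
    simpa [lift, clasp, translate, period_eq] using congrArg Prod.fst h
  have him : (annulus p').im = (annulus p).im := congrArg (fun P ↦ P.2.re) h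
  have hheight : (annulus p').re * (annulus p').im + (squash p'.2).im =
    (annulus p).re * (annulus p).im + (squash p.2).im := congrArg (fun P ↦ P.2.im) h
  obtain ⟨h₁, h₂⟩ := annulus_sq_mem_Ioo p
  obtain ⟨h₁', h₂'⟩ := annulus_sq_mem_Ioo p'
  obtain ⟨hv₁, hv₂⟩ := abs_lt.mp (abs_squash_im_lt p.2)
  obtain ⟨hv₁', hv₂'⟩ := abs_lt.mp (abs_squash_im_lt p'.2)
  rw [hre, him] at h₁' h₂' hheight
  set x := (annulus p).re
  set y := (annulus p).im
  have : -(2 / 100) < y := by linarith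
  have : y < 2 / 100 := by linarith
  have hy : y ^ 2 < 1 / 100 := by nlinarith
  have hx : x ∈ Ioo (-(8 / 10) : ℝ) (-(7 / 10)) := by constructor <;> linarith
  nlinarith [hx.1, hx.2]

lemma proj_eq_proj_iff {P Q : ℝ × ℂ} :
    proj P = proj Q ↔ ∃ k : ℤ, Q = translate k P := by
  simp only [proj, translate, Prod.mk.injEq, Prod.ext_iff (x := Q), eq_comm (b := P.2),
    exists_and_right]
  refine and_congr_left fun _ ↦ ?_
  rw [eq_comm, ← sub_eq_zero, ← AddCircle.coe_sub, AddCircle.coe_eq_zero_iff]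
  exact exists_congr fun k ↦ by rw [zsmul_eq_mul, eq_sub_iff_add_eq', eq_comm]

lemma embedding_injective : Function.Injective embedding := by
  intro p p' hpp
  obtain ⟨k, hk⟩ := proj_eq_proj_iff.mp hpp
  have hre (p) : |(annulus p).re| < 11 / 10 :=
    abs_lt_of_sq_lt_sq (by nlinarith [sq_nonneg (annulus p).im, (annulus_sq_mem_Ioo p).2])
      (by norm_num)
  have hkre : (annulus p').re = (annulus p).re + k * (3 / 2) := congrArg Prod.fst hk
  have hk2 : |(k : ℝ)| < 2 := by
    rw [abs_lt]
    obtain ⟨h₁, h₂⟩ := abs_lt.mp (hre p)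
    obtain ⟨h₁', h₂'⟩ := abs_lt.mp (hre p')
    constructor <;> linarith
  have hcases : k = -1 ∨ k = 0 ∨ k = 1 := by
    have := abs_lt.mp (show |k| < 2 by exact_mod_cast hk2)
    lia
  obtain rfl | rfl | rfl := hcases
  · exact absurd (by rw [hk]; ext <;> simp [translate]) (lift_ne_translate p' p)
  · exact lift_injective (by rw [hk]; ext <;> simp [translate])
  · exact (lift_ne_translate p p' hk).elim

/-- In the coordinates of the universal covering, `annulus` is the exponential map, up to a linear
change of coordinates. -/
lemma isOpenMap_embedding : IsOpenMap embedding := by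
  let e : ℝ × ℂ ≃ₜ ℂ × ℝ :=
    { toFun P := (⟨P.2.re, 2 * Real.pi / period * P.1⟩, P.2.im)
      invFun q := (period / (2 * Real.pi) * q.1.im, ⟨q.1.re, q.2⟩)
      left_inv P := by
        have := Real.pi_ne_zero
        exact Prod.ext (by field_simp [period_ne_zero]) rfl
      right_inv q := by
        have := Real.pi_ne_zero
        exact Prod.ext (Complex.ext rfl (by field_simp [period_ne_zero])) rfl
      continuous_toFun := by fun_prop
      continuous_invFun := by fun_prop }
  have hproj :
      embedding ∘ proj = proj ∘ clasp ∘ Prod.map Complex.exp id ∘ e ∘ Prod.map id squash := by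
    funext P
    simp only [Function.comp, embedding, lift, annulus_proj]
    rfl
  have hopen : IsOpenMap (embedding ∘ proj) := hproj ▸ isOpenMap_proj.comp (clasp.isOpenMap.comp
    ((Complex.isOpenMap_exp.prodMap .id).comp
      (e.isOpenMap.comp (IsOpenMap.id.prodMap isOpenEmbedding_squash.isOpenMap))))
  intro U hU
  have := hopen _ (hU.preimage continuous_proj)
  rwa [image_comp, image_preimage_eq _ surjective_proj] at this

lemma isOpenEmbedding_embedding : IsOpenEmbedding embedding :=
  .of_continuous_injective_isOpenMap continuous_embedding embedding_injective isOpenMap_embedding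

lemma norm_embedding_snd_lt (p : SolidTorus) : ‖(embedding p).2‖ < 2 := by
  obtain ⟨h₁, h₂⟩ := annulus_sq_mem_Ioo p
  obtain ⟨hv₁, hv₂⟩ := abs_lt.mp (abs_squash_im_lt p.2)
  refine lt_of_pow_lt_pow_left₀ 2 (by norm_num) ?_
  change ‖(⟨(annulus p).im, (annulus p).re * (annulus p).im + (squash p.2).im⟩ : ℂ)‖ ^ 2 < 2 ^ 2
  rw [← Complex.normSq_eq_norm_sq, Complex.normSq_apply]
  set x := (annulus p).re
  set y := (annulus p).im
  have hxy₁ : x * y ≤ 6 / 10 := by nlinarith [sq_nonneg (x - y)]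
  have hxy₂ : -(6 / 10) ≤ x * y := by nlinarith [sq_nonneg (x + y)]
  nlinarith

end Whitehead

/-- The Whitehead manifold. -/
abbrev WhiteheadManifold : Type := Telescope Whitehead.embedding

namespace WhiteheadManifold

open Whitehead

instance : T2Space WhiteheadManifold := Telescope.t2Space isOpenEmbedding_embedding

instance : SecondCountableTopology WhiteheadManifold :=
  Telescope.secondCountableTopology isOpenEmbedding_embedding

theorem nonempty_prod_real_homeomorph :
    Nonempty ((WhiteheadManifold × ℝ) ≃ₜ EuclideanSpace ℝ (Fin 4)) := by
  obtain ⟨e⟩ := Telescope.nonempty_prod_real_homeomorph isOpenEmbedding_embedding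
    norm_embedding_snd_lt (X := fun p ↦ (lift p).1) (continuous_fst.comp continuous_lift)
    fun _ ↦ rfl
  let e' : ((ℝ × ℂ) × ℝ) ≃L[ℝ] EuclideanSpace ℝ (Fin 4) :=
    ContinuousLinearEquiv.ofFinrankEq (by simp)
  exact ⟨e.trans e'.toHomeomorph⟩

end WhiteheadManifold

namespace Whitehead

/-! ### A flat bundle on the complement of the Whitehead curve -/

/-- A representation of the fundamental group of the complement of the curve `embedding '' core` in
the solid torus, given by Wirtinger generators. In the vertical projection the lift of the curve
with number `k` to the universal covering is the unit circle about `k * period`, which crosses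
only the circles with numbers `k - 1` and `k + 1`; `upper` and `lower` are the meridians of the
upper and lower arcs of the lift number `0`, and `shift` is the deck transformation. -/
structure LinkRepresentation (G : Type*) [Group G] where
  upper : G
  lower : G
  shift : G
  shift_conj_lower : shift * lower * shift⁻¹ = upper⁻¹ * (shift * upper * shift⁻¹) * upper
  upper_eq : upper = (shift * lower * shift⁻¹)⁻¹ * lower * (shift * lower * shift⁻¹)

namespace LinkRepresentation

variable {G : Type*} [Group G] (ρ : LinkRepresentation G)

/-- The meridian of the upper arc of the `k`-th lift of the curve. -/
def top (k : ℤ) : G := ρ.shift ^ k * ρ.upper * (ρ.shift ^ k)⁻¹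

/-- The meridian of the lower arc of the `k`-th lift of the curve. -/
def bot (k : ℤ) : G := ρ.shift ^ k * ρ.lower * (ρ.shift ^ k)⁻¹

lemma top_add (k l : ℤ) : ρ.top (k + l) = ρ.shift ^ l * ρ.top k * (ρ.shift ^ l)⁻¹ := by
  rw [top, add_comm, zpow_add, top]
  group

lemma bot_add (k l : ℤ) : ρ.bot (k + l) = ρ.shift ^ l * ρ.bot k * (ρ.shift ^ l)⁻¹ := by
  rw [bot, add_comm, zpow_add, bot]
  group

lemma bot_add_one (k : ℤ) : ρ.bot (k + 1) = (ρ.top k)⁻¹ * ρ.top (k + 1) * ρ.top k := by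
  have hbot : ρ.bot (k + 1) = ρ.shift ^ k * (ρ.shift * ρ.lower * ρ.shift⁻¹) * (ρ.shift ^ k)⁻¹ := by
    rw [bot, zpow_add_one]
    group
  rw [hbot, ρ.shift_conj_lower, top, top, zpow_add_one]
  group

lemma top_eq (k : ℤ) : ρ.top k = (ρ.bot (k + 1))⁻¹ * ρ.bot k * ρ.bot (k + 1) := by
  rw [top, ρ.upper_eq, bot, bot, zpow_add_one]
  group

end LinkRepresentation

/-- The cylinder over the `k`-th circle: negative inside, positive outside. -/
noncomputable def cyl (k : ℤ) (P : ℝ × ℂ) : ℝ := (P.1 - k * period) ^ 2 + P.2.re ^ 2 - 1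

/-- The height above the saddle surface which cuts the `k`-th lift of the curve out of the cylinder
`cyl k = 0`. -/
noncomputable def height (k : ℤ) (P : ℝ × ℂ) : ℝ := P.2.im - (P.1 - k * period) * P.2.re

@[fun_prop]
lemma continuous_cyl (k : ℤ) : Continuous (cyl k) := by unfold cyl; fun_prop

@[fun_prop]
lemma continuous_height (k : ℤ) : Continuous (height k) := by unfold height; fun_prop

lemma cyl_translate (k l : ℤ) (P : ℝ × ℂ) : cyl (k + l) (translate l P) = cyl k P := by
  simp only [cyl, translate]; push_cast; ring

lemma height_translate (k l : ℤ) (P : ℝ × ℂ) : height (k + l) (translate l P) = height k P := by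
  simp only [height, translate]; push_cast; ring

lemma cyl_add_one (k : ℤ) (P : ℝ × ℂ) :
    cyl (k + 1) P = cyl k P - 3 * (P.1 - k * period) + 9 / 4 := by
  simp only [cyl, period_eq]; push_cast; ring

lemma height_add_one (k : ℤ) (P : ℝ × ℂ) : height (k + 1) P = height k P + 3 / 2 * P.2.re := by
  simp only [height, period_eq]; push_cast; ring

/-- The sign bit of a real number. -/
noncomputable def neg (x : ℝ) : Bool := decide (x < 0)

lemma neg_of_neg {x : ℝ} (h : x < 0) : neg x = true := decide_eq_true h

lemma neg_of_nonneg {x : ℝ} (h : 0 ≤ x) : neg x = false := decide_eq_false h.not_gt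

lemma eventually_neg_eq {X : Type*} [TopologicalSpace X] {f : X → ℝ} (hf : Continuous f) {x : X}
    (h : f x ≠ 0) : ∀ᶠ y in 𝓝 x, neg (f y) = neg (f x) := by
  obtain h | h := h.lt_or_gt
  · filter_upwards [hf.continuousAt.eventually_lt_const h] with y hy
    rw [neg_of_neg hy, neg_of_neg h]
  · filter_upwards [hf.continuousAt.eventually_const_lt h] with y hy
    rw [neg_of_nonneg hy.le, neg_of_nonneg h.le]

namespace LinkRepresentation

variable {G : Type*} [Group G] (ρ : LinkRepresentation G)

/-- The value of a potential below the curves number `k` and `k + 1`: the bit `y` selects the upper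
or lower half of the projection plane, the bits `a`, `b` indicate the shadows of the two curves. -/
def table (k : ℤ) (y a b : Bool) : G :=
  if y then ρ.top (k + 1) ^ b.toNat * ρ.top k ^ a.toNat
  else ρ.bot k ^ a.toNat * ρ.bot (k + 1) ^ b.toNat

lemma table_add (k l : ℤ) (y a b : Bool) :
    ρ.table (k + l) y a b = ρ.shift ^ l * ρ.table k y a b * (ρ.shift ^ l)⁻¹ := by
  rw [table, add_right_comm, ρ.top_add k, ρ.top_add (k + 1), ρ.bot_add k, ρ.bot_add (k + 1), table]
  simp only [conj_pow]
  split_ifs <;> simp only [mul_assoc, inv_mul_cancel_left]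

lemma table_sub_one (k : ℤ) (y a : Bool) : ρ.table (k - 1) y false a = ρ.table k y a false := by
  simp [table]

lemma table_eq_mul_left (k : ℤ) {y b : Bool} (a : Bool) (h : (y || b) = true) :
    ρ.table k y a b = ρ.table k y false b * ρ.top k ^ a.toNat := by
  cases a
  · simp
  cases y
  · obtain rfl : b = true := h
    simp only [table, ρ.top_eq k, Bool.false_eq_true, if_false, Bool.toNat_true, Bool.toNat_false,
      pow_zero, pow_one]
    group
  · simp [table]

lemma table_eq_mul_right (k : ℤ) {y a : Bool} (b : Bool) (h : (y && !a) = false) :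
    ρ.table k y a b = ρ.table k y a false * ρ.bot (k + 1) ^ b.toNat := by
  cases b
  · simp
  cases y
  · simp [table]
  · obtain rfl : a = true := by simpa using h
    simp only [table, ρ.bot_add_one k, if_true, Bool.toNat_true, Bool.toNat_false, pow_zero,
      pow_one]
    group

/-- The potential near `P` of the flat bundle on the part of the covering space where no curve but
the ones with numbers `k` and `k + 1` matter. The walls over which it jumps are the parts of the
cylinders which hang below the curves. -/
noncomputable def potential (k : ℤ) (P Q : ℝ × ℂ) : G :=
  ρ.table k (neg (-P.2.re)) (neg (cyl k Q) && neg (height k P))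
    (neg (cyl (k + 1) Q) && neg (height (k + 1) P))

/-- The parallel transport between nearby points given by `potential`. -/
noncomputable def sheetTransport (k : ℤ) (P Q : ℝ × ℂ) : G :=
  (ρ.potential k P P)⁻¹ * ρ.potential k P Q

lemma potential_translate (k l : ℤ) (P Q : ℝ × ℂ) :
    ρ.potential (k + l) (translate l P) (translate l Q) =
      ρ.shift ^ l * ρ.potential k P Q * (ρ.shift ^ l)⁻¹ := by
  rw [potential, table_add, add_right_comm, cyl_translate, cyl_translate, height_translate,
    height_translate]
  rfl

lemma sheetTransport_translate (k l : ℤ) (P Q : ℝ × ℂ) :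
    ρ.sheetTransport (k + l) (translate l P) (translate l Q) =
      ρ.shift ^ l * ρ.sheetTransport k P Q * (ρ.shift ^ l)⁻¹ := by
  rw [sheetTransport, potential_translate, potential_translate, sheetTransport]
  group

lemma cyl_nonneg {k l : ℤ} {P : ℝ × ℂ} (hP : |P.1 - k * period| < 1 / 2) (hl : |l - k| = 1) :
    0 ≤ cyl l P := by
  have hcyl : cyl l P = (P.1 - k * period - (l - k : ℤ) * period) ^ 2 + P.2.re ^ 2 - 1 := by
    rw [cyl]; push_cast; ring
  rw [hcyl]
  generalize P.1 - k * period = u at hP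
  obtain ⟨h₁, h₂⟩ := abs_lt.mp hP
  obtain h | h := eq_or_eq_neg_of_abs_eq hl <;> rw [h, period_eq] <;> push_cast <;>
    nlinarith [sq_nonneg P.2.re]

lemma potential_sub_one {k : ℤ} {P Q : ℝ × ℂ} (hQ : |Q.1 - k * period| < 1 / 2) :
    ρ.potential (k - 1) P Q = ρ.potential k P Q := by
  have hprev : neg (cyl (k - 1) Q) = false := neg_of_nonneg (cyl_nonneg hQ (by simp))
  have hnext : neg (cyl (k + 1) Q) = false := neg_of_nonneg (cyl_nonneg hQ (by simp))
  rw [potential, potential, hprev, hnext, sub_add_cancel]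
  simp only [Bool.false_and, table_sub_one]

lemma sheetTransport_sub_one {k : ℤ} {P Q : ℝ × ℂ} (hP : |P.1 - k * period| < 1 / 2)
    (hQ : |Q.1 - k * period| < 1 / 2) :
    ρ.sheetTransport (k - 1) P Q = ρ.sheetTransport k P Q := by
  rw [sheetTransport, potential_sub_one ρ hP, potential_sub_one ρ hQ, sheetTransport]

lemma sheetTransport_mul {k : ℤ} {P Q R : ℝ × ℂ}
    (h : ρ.potential k P Q * (ρ.potential k Q Q)⁻¹ * ρ.potential k Q R = ρ.potential k P R) :
    ρ.sheetTransport k P Q * ρ.sheetTransport k Q R = ρ.sheetTransport k P R := by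
  rw [sheetTransport, sheetTransport, sheetTransport, ← h]
  group

lemma exists_shadow_eq {k : ℤ} {P₀ : ℝ × ℂ} (h : cyl k P₀ = 0 → 0 < height k P₀) :
    ∃ U ∈ 𝓝 P₀, ∀ P ∈ U, ∀ Q ∈ U,
      (neg (cyl k Q) && neg (height k P)) = (neg (cyl k P₀) && neg (height k P)) := by
  by_cases hc : cyl k P₀ = 0
  · refine ⟨_, (continuous_height k).continuousAt.eventually_const_lt (h hc), fun P hP Q _ ↦ ?_⟩
    rw [neg_of_nonneg (le_of_lt hP), Bool.and_false, Bool.and_false]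
  · exact ⟨_, eventually_neg_eq (continuous_cyl k) hc, fun P _ Q hQ ↦ by rw [hQ]⟩

lemma exists_sheetTransport_mul_of_height_pos {k : ℤ} {P₀ : ℝ × ℂ}
    (h₀ : cyl k P₀ = 0 → 0 < height k P₀) (h₁ : cyl (k + 1) P₀ = 0 → 0 < height (k + 1) P₀) :
    ∃ U ∈ 𝓝 P₀, ∀ P ∈ U, ∀ Q ∈ U, ∀ R ∈ U,
      ρ.sheetTransport k P Q * ρ.sheetTransport k Q R = ρ.sheetTransport k P R := by
  obtain ⟨U, hU, hU₀⟩ := exists_shadow_eq h₀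
  obtain ⟨V, hV, hV₁⟩ := exists_shadow_eq h₁
  refine ⟨U ∩ V, inter_mem hU hV, fun P hP Q hQ R hR ↦ ρ.sheetTransport_mul ?_⟩
  simp only [potential, hU₀ P hP.1 Q hQ.1, hU₀ Q hQ.1 Q hQ.1, hU₀ Q hQ.1 R hR.1,
    hU₀ P hP.1 R hR.1, hV₁ P hP.2 Q hQ.2, hV₁ Q hQ.2 Q hQ.2, hV₁ Q hQ.2 R hR.2,
    hV₁ P hP.2 R hR.2]
  group

lemma exists_sheetTransport_mul_of_height_ne {k : ℤ} {P₀ : ℝ × ℂ} (hy : P₀.2.re ≠ 0)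
    (h₀ : height k P₀ ≠ 0) (h₁ : height (k + 1) P₀ ≠ 0) :
    ∃ U ∈ 𝓝 P₀, ∀ P ∈ U, ∀ Q ∈ U, ∀ R ∈ U,
      ρ.sheetTransport k P Q * ρ.sheetTransport k Q R = ρ.sheetTransport k P R := by
  refine ⟨_, (eventually_neg_eq (f := fun P ↦ -P.2.re) (by fun_prop) (neg_ne_zero.mpr hy)).and
    ((eventually_neg_eq (continuous_height k) h₀).and
      (eventually_neg_eq (continuous_height (k + 1)) h₁)), ?_⟩
  rintro P ⟨hP, hP₀, hP₁⟩ Q ⟨hQ, hQ₀, hQ₁⟩ R -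
  apply sheetTransport_mul
  simp only [potential, hP, hP₀, hP₁, hQ, hQ₀, hQ₁]
  group

lemma exists_sheetTransport_mul_of_height_left_neg {k : ℤ} {P₀ : ℝ × ℂ} (h₀ : height k P₀ < 0)
    (h₁ : cyl (k + 1) P₀ ≠ 0)
    (h : 0 < P₀.2.re ∨ cyl (k + 1) P₀ < 0 ∧ height (k + 1) P₀ < 0) :
    ∃ U ∈ 𝓝 P₀, ∀ P ∈ U, ∀ Q ∈ U, ∀ R ∈ U,
      ρ.sheetTransport k P Q * ρ.sheetTransport k Q R = ρ.sheetTransport k P R := by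
  have hmer : ∀ᶠ P in 𝓝 P₀,
      (neg (-P.2.re) || neg (cyl (k + 1) P₀) && neg (height (k + 1) P)) = true := by
    obtain hy | ⟨hc, hh⟩ := h
    · have hre : Continuous fun P : ℝ × ℂ ↦ P.2.re := by fun_prop
      filter_upwards [hre.continuousAt.eventually_const_lt hy] with P hP
      rw [neg_of_neg (neg_lt_zero.mpr hP), Bool.true_or]
    · filter_upwards [(continuous_height (k + 1)).continuousAt.eventually_lt_const hh] with P hP
      rw [neg_of_neg hP, neg_of_neg hc, Bool.true_and, Bool.or_true]
  refine ⟨_, (eventually_neg_eq (continuous_height k) h₀.ne).and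
    ((eventually_neg_eq (continuous_cyl (k + 1)) h₁).and hmer), ?_⟩
  rintro P ⟨hP₀, -, hP⟩ Q ⟨hQ₀, hQ₁, hQ⟩ R ⟨-, hR₁, -⟩
  apply sheetTransport_mul
  simp only [potential, hP₀, hQ₀, hQ₁, hR₁, neg_of_neg h₀, Bool.and_true]
  simp only [table_eq_mul_left ρ k (neg (cyl k _)) hP, table_eq_mul_left ρ k (neg (cyl k _)) hQ]
  group

lemma exists_sheetTransport_mul_of_height_right_neg {k : ℤ} {P₀ : ℝ × ℂ}
    (h₁ : height (k + 1) P₀ < 0) (h₀ : cyl k P₀ ≠ 0)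
    (h : P₀.2.re < 0 ∨ cyl k P₀ < 0 ∧ height k P₀ < 0) :
    ∃ U ∈ 𝓝 P₀, ∀ P ∈ U, ∀ Q ∈ U, ∀ R ∈ U,
      ρ.sheetTransport k P Q * ρ.sheetTransport k Q R = ρ.sheetTransport k P R := by
  have hmer : ∀ᶠ P in 𝓝 P₀,
      (neg (-P.2.re) && !(neg (cyl k P₀) && neg (height k P))) = false := by
    obtain hy | ⟨hc, hh⟩ := h
    · have hre : Continuous fun P : ℝ × ℂ ↦ P.2.re := by fun_prop
      filter_upwards [hre.continuousAt.eventually_lt_const hy] with P hP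
      rw [neg_of_nonneg (neg_nonneg.mpr (le_of_lt hP)), Bool.false_and]
    · filter_upwards [(continuous_height k).continuousAt.eventually_lt_const hh] with P hP
      rw [neg_of_neg hP, neg_of_neg hc, Bool.true_and, Bool.not_true, Bool.and_false]
  refine ⟨_, (eventually_neg_eq (continuous_height (k + 1)) h₁.ne).and
    ((eventually_neg_eq (continuous_cyl k) h₀).and hmer), ?_⟩
  rintro P ⟨hP₁, -, hP⟩ Q ⟨hQ₁, hQ₀, hQ⟩ R ⟨-, hR₀, -⟩
  apply sheetTransport_mul
  simp only [potential, hP₁, hQ₁, hQ₀, hR₀, neg_of_neg h₁, Bool.and_true]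
  simp only [table_eq_mul_right ρ k (neg (cyl (k + 1) _)) hP,
    table_eq_mul_right ρ k (neg (cyl (k + 1) _)) hQ]
  group

/-- Where the shadow of a curve ends, the height of the other curve decides which of the Wirtinger
relations is needed. -/
lemma exists_sheetTransport_mul {k : ℤ} {P₀ : ℝ × ℂ} (hx : P₀.1 - k * period ∈ Ico 0 period)
    (h₀ : cyl k P₀ = 0 → height k P₀ ≠ 0) (h₁ : cyl (k + 1) P₀ = 0 → height (k + 1) P₀ ≠ 0) :
    ∃ U ∈ 𝓝 P₀, ∀ P ∈ U, ∀ Q ∈ U, ∀ R ∈ U,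
      ρ.sheetTransport k P Q * ρ.sheetTransport k Q R = ρ.sheetTransport k P R := by
  have hcyl := cyl_add_one k P₀
  have hheight := height_add_one k P₀
  have hcyl₀ : cyl k P₀ = (P₀.1 - k * period) ^ 2 + P₀.2.re ^ 2 - 1 := rfl
  generalize P₀.1 - k * period = u at hx hcyl hcyl₀
  obtain ⟨hx₀, hx₁⟩ : 0 ≤ u ∧ u < 3 / 2 := period_eq ▸ hx
  by_cases hc₀ : cyl k P₀ = 0 <;> by_cases hc₁ : cyl (k + 1) P₀ = 0
  · refine ρ.exists_sheetTransport_mul_of_height_ne (fun hy ↦ ?_) (h₀ hc₀) (h₁ hc₁)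
    rw [hy] at hcyl₀
    nlinarith
  · obtain hpos | hneg := (h₀ hc₀).symm.lt_or_gt
    · exact ρ.exists_sheetTransport_mul_of_height_pos (fun _ ↦ hpos) fun h ↦ absurd h hc₁
    obtain hy | hy | hy := lt_trichotomy P₀.2.re 0
    · exact ρ.exists_sheetTransport_mul_of_height_ne hy.ne hneg.ne (by linarith)
    · rw [hy] at hcyl₀ hheight
      exact ρ.exists_sheetTransport_mul_of_height_left_neg hneg hc₁
        (.inr ⟨by nlinarith, by linarith⟩)
    · exact ρ.exists_sheetTransport_mul_of_height_left_neg hneg hc₁ (.inl hy)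
  · obtain hpos | hneg := (h₁ hc₁).symm.lt_or_gt
    · exact ρ.exists_sheetTransport_mul_of_height_pos (fun h ↦ absurd h hc₀) fun _ ↦ hpos
    obtain hy | hy | hy := lt_trichotomy P₀.2.re 0
    · exact ρ.exists_sheetTransport_mul_of_height_right_neg hneg hc₀ (.inl hy)
    · rw [hy] at hcyl₀ hheight
      exact ρ.exists_sheetTransport_mul_of_height_right_neg hneg hc₀
        (.inr ⟨by nlinarith, by linarith⟩)
    · exact ρ.exists_sheetTransport_mul_of_height_ne hy.ne' (by linarith) hneg.ne
  · exact ρ.exists_sheetTransport_mul_of_height_pos (fun h ↦ absurd h hc₀) fun h ↦ absurd h hc₁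

end LinkRepresentation

/-- The number of the fundamental domain of the universal covering which contains a point. -/
noncomputable def sheet (P : ℝ × ℂ) : ℤ := ⌊P.1 / period⌋

lemma sheet_eq_iff {P : ℝ × ℂ} {k : ℤ} : sheet P = k ↔ P.1 - k * period ∈ Ico 0 period := by
  rw [sheet, Int.floor_eq_iff, le_div_iff₀ Fact.out, div_lt_iff₀ Fact.out, mem_Ico, sub_nonneg,
    sub_lt_iff_lt_add', add_one_mul]

lemma sheet_translate (k : ℤ) (P : ℝ × ℂ) : sheet (translate k P) = sheet P + k := by
  rw [sheet, translate, add_div, mul_div_cancel_right₀ _ period_ne_zero, Int.floor_add_intCast,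
    sheet]

lemma mem_band_sheet (P : ℝ × ℂ) : P.1 - sheet P * period ∈ Ioo (-(1 / 2)) 2 := by
  obtain ⟨h₁, h₂⟩ := sheet_eq_iff.mp (rfl : sheet P = _)
  exact ⟨lt_of_lt_of_le (by norm_num) h₁, h₂.trans (by norm_num [period_eq])⟩

namespace LinkRepresentation

variable {G : Type*} [Group G] (ρ : LinkRepresentation G)

/-- The parallel transport between nearby points of the universal covering, twisted by the deck
transformations in such a way that it becomes periodic. -/
noncomputable def coverTransport (P Q : ℝ × ℂ) : G :=
  (ρ.shift ^ sheet P)⁻¹ * ρ.sheetTransport (sheet P) P Q * ρ.shift ^ sheet Q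

lemma coverTransport_translate (k : ℤ) (P Q : ℝ × ℂ) :
    ρ.coverTransport (translate k P) (translate k Q) = ρ.coverTransport P Q := by
  rw [coverTransport, sheet_translate, sheet_translate, sheetTransport_translate, coverTransport]
  group

/-- The potentials of consecutive sheets agree in a band about their common boundary, so that each
of them can be used a little beyond its sheet. -/
lemma exists_coverTransport_eq {k : ℤ} {P₀ : ℝ × ℂ}
    (h : P₀.1 - k * period ∈ Ioo (-(1 / 2)) 2) :
    ∃ U ∈ 𝓝 P₀, ∀ P ∈ U, ∀ Q ∈ U, ρ.coverTransport P Q =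
      (ρ.shift ^ sheet P)⁻¹ * ρ.sheetTransport k P Q * ρ.shift ^ sheet Q := by
  have hcont (l : ℤ) : Continuous fun P : ℝ × ℂ ↦ P.1 - l * period := by fun_prop
  suffices ∃ U ∈ 𝓝 P₀, ∀ P ∈ U, ∀ Q ∈ U,
      ρ.sheetTransport (sheet P) P Q = ρ.sheetTransport k P Q by
    obtain ⟨U, hU, h⟩ := this
    exact ⟨U, hU, fun P hP Q hQ ↦ by rw [coverTransport, h P hP Q hQ]⟩
  by_cases hinner : P₀.1 - k * period ∈ Ioo 0 period
  · refine ⟨_, (isOpen_Ioo.preimage (hcont k)).mem_nhds hinner, fun P hP Q _ ↦ ?_⟩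
    rw [sheet_eq_iff.mpr (Ioo_subset_Ico_self hP)]
  obtain ⟨l, hl, hlk⟩ : ∃ l : ℤ, |P₀.1 - l * period| < 1 / 2 ∧ (l = k ∨ l - 1 = k) := by
    rw [mem_Ioo, not_and_or, not_lt, not_lt] at hinner
    obtain hle | hge := hinner
    · exact ⟨k, abs_lt.mpr ⟨h.1, hle.trans_lt (by norm_num)⟩, .inl rfl⟩
    · refine ⟨k + 1, ?_, .inr (add_sub_cancel_right k 1)⟩
      obtain ⟨-, h₂⟩ := h
      push_cast
      rw [add_one_mul, ← sub_sub]
      generalize P₀.1 - k * period = u at *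
      rw [abs_lt]
      constructor <;> linarith [period_eq]
  refine ⟨_, (isOpen_lt (hcont l).abs continuous_const).mem_nhds hl,
    fun P (hP : |P.1 - l * period| < 1 / 2) Q hQ ↦ ?_⟩
  have hseam := ρ.sheetTransport_sub_one hP hQ
  have hsheet : sheet P = l ∨ sheet P = l - 1 := by
    obtain ⟨h₁, h₂⟩ := abs_lt.mp hP
    simp only [sheet_eq_iff, mem_Ico]
    push_cast
    rw [sub_one_mul, ← sub_add]
    generalize P.1 - l * period = u at *
    by_cases hu : 0 ≤ u
    · exact .inl ⟨hu, by linarith [period_eq]⟩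
    · exact .inr ⟨by linarith [period_eq], by linarith⟩
  obtain rfl | rfl := hlk <;> obtain hP' | hP' := hsheet <;> rw [hP'] <;> simp only [hseam]

end LinkRepresentation

/-- The core circle of the solid torus. -/
def core : Set SolidTorus := {p | p.2 = 0}

lemma mem_image_core {P : ℝ × ℂ} {k : ℤ} (hc : cyl k P = 0) (hh : height k P = 0) :
    proj P ∈ embedding '' core := by
  let z : ℂ := ⟨P.1 - k * period, P.2.re⟩
  have hz : ‖z‖ = 1 := by
    rw [← sq_eq_sq₀ (norm_nonneg _) zero_le_one, ← Complex.normSq_eq_norm_sq, Complex.normSq_apply]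
    have : cyl k P = z.re * z.re + z.im * z.im - 1 := by simp only [cyl, z]; ring
    linarith
  obtain ⟨θ, hθ⟩ := (AddCircle.homeomorphCircle period_ne_zero).surjective
    ⟨z, mem_sphere_zero_iff_norm.mpr hz⟩
  have hsquash : squash 0 = 0 := by rw [squash_apply, mul_zero]
  have hannulus : annulus (θ, 0) = z := by
    rw [AddCircle.homeomorphCircle_apply] at hθ
    simp [annulus, hsquash, hθ]
  refine ⟨(θ, 0), rfl, proj_eq_proj_iff.mpr ⟨k, ?_⟩⟩
  rw [lift, hannulus, hsquash]
  exact Prod.ext (sub_add_cancel _ _).symm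
    (Complex.ext rfl ((sub_eq_zero.mp hh).trans (add_zero _).symm))

namespace LinkRepresentation

variable {G : Type*} [Group G] (ρ : LinkRepresentation G)

lemma exists_coverTransport_mul {P₀ : ℝ × ℂ} (hP₀ : proj P₀ ∉ embedding '' core) :
    ∃ U ∈ 𝓝 P₀, ∀ P ∈ U, ∀ Q ∈ U, ∀ R ∈ U,
      ρ.coverTransport P Q * ρ.coverTransport Q R = ρ.coverTransport P R := by
  obtain ⟨U, hU, hUeq⟩ := ρ.exists_coverTransport_eq (mem_band_sheet P₀)
  obtain ⟨V, hV, hVmul⟩ := ρ.exists_sheetTransport_mul (sheet_eq_iff.mp (rfl : sheet P₀ = _))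
    (fun hc hh ↦ hP₀ (mem_image_core hc hh)) fun hc hh ↦ hP₀ (mem_image_core hc hh)
  refine ⟨U ∩ V, inter_mem hU hV, fun P hP Q hQ R hR ↦ ?_⟩
  rw [hUeq P hP.1 Q hQ.1, hUeq Q hQ.1 R hR.1, hUeq P hP.1 R hR.1,
    ← hVmul P hP.2 Q hQ.2 R hR.2]
  group

open Classical in
/-- The parallel transport between nearby points of the solid torus: `coverTransport` between
nearby lifts. -/
noncomputable def transport (p q : SolidTorus) : G :=
  if h : ∃ PQ : (ℝ × ℂ) × (ℝ × ℂ), proj PQ.1 = p ∧ proj PQ.2 = q ∧ |PQ.1.1 - PQ.2.1| < 3 / 4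
  then ρ.coverTransport h.choose.1 h.choose.2 else 1

lemma transport_proj {P Q : ℝ × ℂ} (h : |P.1 - Q.1| < 3 / 4) :
    ρ.transport (proj P) (proj Q) = ρ.coverTransport P Q := by
  have hex : ∃ PQ : (ℝ × ℂ) × (ℝ × ℂ),
      proj PQ.1 = proj P ∧ proj PQ.2 = proj Q ∧ |PQ.1.1 - PQ.2.1| < 3 / 4 := ⟨(P, Q), rfl, rfl, h⟩
  rw [transport, dif_pos hex]
  obtain ⟨hP, hQ, hPQ⟩ := hex.choose_spec
  obtain ⟨k, hk⟩ := proj_eq_proj_iff.mp hP.symm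
  obtain ⟨l, hl⟩ := proj_eq_proj_iff.mp hQ.symm
  rw [hk, hl] at hPQ ⊢
  have hkl : |((k - l : ℤ) : ℝ)| < 1 := by
    simp only [translate, period_eq] at hPQ
    rw [abs_lt] at h hPQ ⊢
    push_cast
    constructor <;> linarith
  obtain rfl : k = l := sub_eq_zero.mp (Int.abs_lt_one_iff.mp (by exact_mod_cast hkl))
  exact ρ.coverTransport_translate k P Q

lemma exists_transport_proj_eq (P₀ : ℝ × ℂ) :
    ∃ U ∈ 𝓝 P₀, ∀ P ∈ U, ∀ Q ∈ U, ρ.transport (proj P) (proj Q) = ρ.coverTransport P Q := by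
  have hcont : Continuous fun P : ℝ × ℂ ↦ |P.1 - P₀.1| := by fun_prop
  refine ⟨{P | |P.1 - P₀.1| < 3 / 8}, hcont.continuousAt.eventually_lt_const (by simp),
    fun P hP Q hQ ↦ ρ.transport_proj ?_⟩
  calc |P.1 - Q.1| ≤ |P.1 - P₀.1| + |P₀.1 - Q.1| := abs_sub_le _ _ _
    _ < 3 / 8 + 3 / 8 := add_lt_add hP (by rwa [abs_sub_comm])
    _ = 3 / 4 := by norm_num

theorem isLocalCocycleOn_transport : IsLocalCocycleOn ρ.transport (embedding '' core)ᶜ := by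
  intro p hp
  obtain ⟨P₀, rfl⟩ := surjective_proj p
  obtain ⟨U, hU, hUeq⟩ := ρ.exists_transport_proj_eq P₀
  obtain ⟨V, hV, hVmul⟩ := ρ.exists_coverTransport_mul hp
  refine ⟨proj '' (U ∩ V),
    mem_nhdsWithin_of_mem_nhds (isOpenMap_proj.image_mem_nhds (inter_mem hU hV)), ?_⟩
  rintro _ ⟨P, hP, rfl⟩ _ ⟨Q, hQ, rfl⟩ _ ⟨R, hR, rfl⟩
  rw [hUeq P hP.1 Q hQ.1, hUeq Q hQ.1 R hR.1, hUeq P hP.1 R hR.1]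
  exact hVmul P hP.2 Q hQ.2 R hR.2

end LinkRepresentation

end Whitehead

/-! ### Holonomies on the boundary tori -/

/-- The transport described by `c` along the path `γ` from time `a` to time `b` is `g`: each local
potential of `c` along the path changes by the factor `g`. -/
def HasHolonomy {G X : Type*} [Group G] (c : X → X → G) (γ : ℝ → X) (a b : ℝ) (g : G) : Prop :=
  ∀ τ : ℝ → G, IsLocalPotentialOn (fun s t ↦ c (γ s) (γ t)) τ (Icc a b) → τ b = τ a * g

namespace HasHolonomy

variable {G X : Type*} [Group G] {c : X → X → G} {γ : ℝ → X} {a b d : ℝ} {g g' : G}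

lemma trans (h : HasHolonomy c γ a b g) (h' : HasHolonomy c γ b d g') (hab : a ≤ b) (hbd : b ≤ d) :
    HasHolonomy c γ a d (g * g') := fun τ hτ ↦ by
  rw [h' τ (hτ.mono (Icc_subset_Icc_left hab)), h τ (hτ.mono (Icc_subset_Icc_right hbd)), mul_assoc]

lemma of_potential {σ : ℝ → G} (hab : a ≤ b)
    (hσ : IsLocalPotentialOn (fun s t ↦ c (γ s) (γ t)) σ (Icc a b)) :
    HasHolonomy c γ a b ((σ a)⁻¹ * σ b) := fun τ hτ ↦ by
  have := hτ.mul_inv_eq_mul_inv hσ isPreconnected_Icc (left_mem_Icc.mpr hab)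
    (right_mem_Icc.mpr hab)
  rw [← mul_assoc, this, inv_mul_cancel_right]

end HasHolonomy

namespace Whitehead

namespace LinkRepresentation

variable {G : Type*} [Group G] (ρ : LinkRepresentation G)

lemma isLocalPotentialOn_transport_proj {γ : ℝ → ℝ × ℂ} (hγ : Continuous γ) {s : Set ℝ} {F : ℝ → G}
    {k : ℤ} (hband : ∀ t ∈ s, (γ t).1 - k * period ∈ Ioo (-(1 / 2)) 2)
    (hF : IsLocalPotentialOn (fun t t' ↦ ρ.sheetTransport k (γ t) (γ t')) F s) :
    IsLocalPotentialOn (fun t t' ↦ ρ.transport (proj (γ t)) (proj (γ t')))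
      (fun t ↦ F t * ρ.shift ^ sheet (γ t)) s := by
  intro t ht
  obtain ⟨U, hU, hUeq⟩ := ρ.exists_transport_proj_eq (γ t)
  obtain ⟨V, hV, hVeq⟩ := ρ.exists_coverTransport_eq (hband t ht)
  obtain ⟨W, hW, hWeq⟩ := hF t ht
  refine ⟨γ ⁻¹' (U ∩ V) ∩ W, inter_mem (mem_nhdsWithin_of_mem_nhds
    (hγ.continuousAt.preimage_mem_nhds (inter_mem hU hV))) hW, ?_⟩
  rintro p ⟨⟨hpU, hpV⟩, hpW⟩ q ⟨⟨hqU, hqV⟩, hqW⟩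
  beta_reduce at hWeq ⊢
  rw [hUeq _ hpU _ hqU, hVeq _ hpV _ hqV, hWeq _ hpW _ hqW]
  group

lemma potential_eq_one {k : ℤ} {γ : ℝ → ℝ × ℂ} {s : Set ℝ}
    (h₀ : (∀ t ∈ s, 0 ≤ cyl k (γ t)) ∨ ∀ t ∈ s, 0 ≤ height k (γ t))
    (h₁ : (∀ t ∈ s, 0 ≤ cyl (k + 1) (γ t)) ∨ ∀ t ∈ s, 0 ≤ height (k + 1) (γ t)) {p q : ℝ}
    (hp : p ∈ s) (hq : q ∈ s) : ρ.potential k (γ p) (γ q) = 1 := by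
  have hshadow (l : ℤ) (h : (∀ t ∈ s, 0 ≤ cyl l (γ t)) ∨ ∀ t ∈ s, 0 ≤ height l (γ t)) :
      (neg (cyl l (γ q)) && neg (height l (γ p))) = false := by
    obtain h | h := h
    · rw [neg_of_nonneg (h q hq), Bool.false_and]
    · rw [neg_of_nonneg (h p hp), Bool.and_false]
  rw [potential, hshadow k h₀, hshadow (k + 1) h₁]
  simp [table]

/-- Above the curves, only the passage between sheets contributes to the holonomy. -/
lemma hasHolonomy_transport_of_above {γ : ℝ → ℝ × ℂ} (hγ : Continuous γ) {a b : ℝ} (hab : a ≤ b)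
    {k : ℤ} (hband : ∀ t ∈ Icc a b, (γ t).1 - k * period ∈ Ioo (-(1 / 2)) 2)
    (h₀ : (∀ t ∈ Icc a b, 0 ≤ cyl k (γ t)) ∨ ∀ t ∈ Icc a b, 0 ≤ height k (γ t))
    (h₁ : (∀ t ∈ Icc a b, 0 ≤ cyl (k + 1) (γ t)) ∨ ∀ t ∈ Icc a b, 0 ≤ height (k + 1) (γ t)) :
    HasHolonomy ρ.transport (proj ∘ γ) a b
      ((ρ.shift ^ sheet (γ a))⁻¹ * ρ.shift ^ sheet (γ b)) := by
  have hpot : IsLocalPotentialOn (fun t t' ↦ ρ.sheetTransport k (γ t) (γ t')) 1 (Icc a b) :=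
    fun t _ ↦ ⟨_, self_mem_nhdsWithin, fun p hp q hq ↦ by
      simp [sheetTransport, ρ.potential_eq_one h₀ h₁ hp hp, ρ.potential_eq_one h₀ h₁ hp hq]⟩
  simpa [Function.comp_def] using
    HasHolonomy.of_potential hab (ρ.isLocalPotentialOn_transport_proj hγ hband hpot)

/-- The potential at `P`, as seen from points below the curves. -/
noncomputable def lowerPotential (k : ℤ) (y : Bool) (P : ℝ × ℂ) : G :=
  ρ.table k y (neg (cyl k P)) (neg (cyl (k + 1) P))

lemma potential_eq_lowerPotential {k : ℤ} {y : Bool} {γ : ℝ → ℝ × ℂ} {s : Set ℝ}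
    (hy : ∀ t ∈ s, neg (-(γ t).2.re) = y)
    (h₀ : (∀ t ∈ s, 0 ≤ cyl k (γ t)) ∨ ∀ t ∈ s, height k (γ t) < 0)
    (h₁ : (∀ t ∈ s, 0 ≤ cyl (k + 1) (γ t)) ∨ ∀ t ∈ s, height (k + 1) (γ t) < 0) {p q : ℝ}
    (hp : p ∈ s) (hq : q ∈ s) : ρ.potential k (γ p) (γ q) = ρ.lowerPotential k y (γ q) := by
  have hshadow (l : ℤ) (h : (∀ t ∈ s, 0 ≤ cyl l (γ t)) ∨ ∀ t ∈ s, height l (γ t) < 0) :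
      (neg (cyl l (γ q)) && neg (height l (γ p))) = neg (cyl l (γ q)) := by
    obtain h | h := h
    · rw [neg_of_nonneg (h q hq), Bool.false_and]
    · rw [neg_of_neg (h p hp), Bool.and_true]
  rw [potential, hy p hp, hshadow k h₀, hshadow (k + 1) h₁, lowerPotential]

lemma sheetTransport_eq_one {k : ℤ} {P Q : ℝ × ℂ} (h₀ : neg (cyl k Q) = neg (cyl k P))
    (h₁ : neg (cyl (k + 1) Q) = neg (cyl (k + 1) P)) : ρ.sheetTransport k P Q = 1 := by
  rw [sheetTransport, potential, potential, h₀, h₁, inv_mul_cancel]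

lemma isLocalPotentialOn_lowerPotential {γ : ℝ → ℝ × ℂ} (hγ : Continuous γ) {a b : ℝ} {k : ℤ}
    {y : Bool} (hy : ∀ t ∈ Ioo a b, neg (-(γ t).2.re) = y)
    (h₀ : (∀ t ∈ Ioo a b, 0 ≤ cyl k (γ t)) ∨ ∀ t ∈ Ioo a b, height k (γ t) < 0)
    (h₁ : (∀ t ∈ Ioo a b, 0 ≤ cyl (k + 1) (γ t)) ∨ ∀ t ∈ Ioo a b, height (k + 1) (γ t) < 0)
    (hend : ∀ t ∈ ({a, b} : Set ℝ), cyl k (γ t) ≠ 0 ∧ cyl (k + 1) (γ t) ≠ 0) :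
    IsLocalPotentialOn (fun t t' ↦ ρ.sheetTransport k (γ t) (γ t'))
      (fun t ↦ ρ.lowerPotential k y (γ t)) (Icc a b) := by
  intro t ht
  by_cases hint : t ∈ Ioo a b
  · refine ⟨_, mem_nhdsWithin_of_mem_nhds (isOpen_Ioo.mem_nhds hint), fun p hp q hq ↦ ?_⟩
    beta_reduce
    rw [sheetTransport, ρ.potential_eq_lowerPotential hy h₀ h₁ hp hp,
      ρ.potential_eq_lowerPotential hy h₀ h₁ hp hq]
  · obtain ⟨hc₀, hc₁⟩ : cyl k (γ t) ≠ 0 ∧ cyl (k + 1) (γ t) ≠ 0 := by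
      rw [mem_Ioo, not_and_or, not_lt, not_lt] at hint
      exact hend t (hint.imp (le_antisymm · ht.1) (le_antisymm ht.2))
    have hcyl (l : ℤ) : Continuous fun t ↦ cyl l (γ t) := (continuous_cyl l).comp hγ
    refine ⟨_, mem_nhdsWithin_of_mem_nhds
      ((eventually_neg_eq (hcyl k) hc₀).and (eventually_neg_eq (hcyl (k + 1)) hc₁)), ?_⟩
    rintro p ⟨hp₀, hp₁⟩ q ⟨hq₀, hq₁⟩
    beta_reduce
    rw [ρ.sheetTransport_eq_one (hq₀.trans hp₀.symm) (hq₁.trans hp₁.symm), lowerPotential,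
      lowerPotential, hp₀, hp₁, hq₀, hq₁, inv_mul_cancel]

lemma hasHolonomy_transport_of_below {γ : ℝ → ℝ × ℂ} (hγ : Continuous γ) {a b : ℝ} (hab : a ≤ b)
    {k : ℤ} (hband : ∀ t ∈ Icc a b, (γ t).1 - k * period ∈ Ioo (-(1 / 2)) 2)
    {y : Bool} (hy : ∀ t ∈ Ioo a b, neg (-(γ t).2.re) = y)
    (h₀ : (∀ t ∈ Ioo a b, 0 ≤ cyl k (γ t)) ∨ ∀ t ∈ Ioo a b, height k (γ t) < 0)
    (h₁ : (∀ t ∈ Ioo a b, 0 ≤ cyl (k + 1) (γ t)) ∨ ∀ t ∈ Ioo a b, height (k + 1) (γ t) < 0)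
    (hend : ∀ t ∈ ({a, b} : Set ℝ), cyl k (γ t) ≠ 0 ∧ cyl (k + 1) (γ t) ≠ 0) :
    HasHolonomy ρ.transport (proj ∘ γ) a b
      ((ρ.lowerPotential k y (γ a) * ρ.shift ^ sheet (γ a))⁻¹ *
        (ρ.lowerPotential k y (γ b) * ρ.shift ^ sheet (γ b))) :=
  .of_potential hab (ρ.isLocalPotentialOn_transport_proj hγ hband
    (ρ.isLocalPotentialOn_lowerPotential hγ hy h₀ h₁ hend))

end LinkRepresentation

/-- The meridian of the torus of radius three. -/
noncomputable def outerMeridian (t : ℝ) : ℝ × ℂ := (0, ⟨3 * Real.cos t, 3 * Real.sin t⟩)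

/-- The longitude of the torus of radius three. -/
def outerLongitude (t : ℝ) : ℝ × ℂ := (t, 3)

/-- The lift of a meridian of a torus about the core of the embedded solid torus. -/
noncomputable def innerMeridian (r t : ℝ) : ℝ × ℂ :=
  (Real.exp (r * Real.cos t), ⟨0, r * Real.sin t⟩)

/-- The lift of a longitude of a torus about the core of the embedded solid torus. -/
noncomputable def innerLongitude (a t : ℝ) : ℝ × ℂ :=
  (a * Real.cos t, ⟨a * Real.sin t, a * Real.cos t * (a * Real.sin t)⟩)

@[fun_prop]
lemma continuous_outerMeridian : Continuous outerMeridian := by unfold outerMeridian; fun_prop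

@[fun_prop]
lemma continuous_outerLongitude : Continuous outerLongitude := by unfold outerLongitude; fun_prop

@[fun_prop]
lemma continuous_innerMeridian (r : ℝ) : Continuous (innerMeridian r) := by
  unfold innerMeridian; fun_prop

@[fun_prop]
lemma continuous_innerLongitude (a : ℝ) : Continuous (innerLongitude a) := by
  unfold innerLongitude; fun_prop

lemma sin_neg_of_mem_Ioo {t : ℝ} (ht : t ∈ Ioo Real.pi (2 * Real.pi)) : Real.sin t < 0 := by
  rw [← Real.sin_sub_two_pi]
  exact Real.sin_neg_of_neg_of_neg_pi_lt (by linarith [ht.2]) (by linarith [ht.1])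

lemma sin_nonpos_of_mem_Icc {t : ℝ} (ht : t ∈ Icc Real.pi (2 * Real.pi)) : Real.sin t ≤ 0 := by
  rw [← Real.sin_sub_two_pi]
  exact Real.sin_nonpos_of_nonpos_of_neg_pi_le (by linarith [ht.2]) (by linarith [ht.1])

lemma cos_neg_of_mem_Ioo {t : ℝ} (ht : t ∈ Ioo (Real.pi / 2) (Real.pi + Real.pi / 2)) :
    Real.cos t < 0 := Real.cos_neg_of_pi_div_two_lt_of_lt ht.1 ht.2

lemma cos_pos_of_mem_Ioo {t : ℝ} (ht : t ∈ Ioo (Real.pi + Real.pi / 2) (2 * Real.pi)) :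
    0 < Real.cos t := by
  rw [← Real.cos_sub_two_pi]
  exact Real.cos_pos_of_mem_Ioo ⟨by linarith [ht.1], by linarith [ht.2, Real.pi_pos]⟩

lemma cos_nonneg_of_mem_Icc {t : ℝ} (ht : t ∈ Icc (Real.pi + Real.pi / 2) (2 * Real.pi)) :
    0 ≤ Real.cos t := by
  rw [← Real.cos_sub_two_pi]
  exact Real.cos_nonneg_of_mem_Icc ⟨by linarith [ht.1], by linarith [ht.2, Real.pi_pos]⟩

lemma cos_pi_add_pi_div_two : Real.cos (Real.pi + Real.pi / 2) = 0 := by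
  simp [Real.cos_add_pi_div_two]

lemma sheet_outerMeridian (t : ℝ) : sheet (outerMeridian t) = 0 := by simp [sheet, outerMeridian]

lemma cyl_outerMeridian (t : ℝ) : cyl 0 (outerMeridian t) = 9 * Real.cos t ^ 2 - 1 := by
  simp only [cyl, outerMeridian]; push_cast; ring

lemma cyl_one_outerMeridian_pos (t : ℝ) : 0 < cyl 1 (outerMeridian t) := by
  simp only [cyl, outerMeridian, period_eq]
  nlinarith [sq_nonneg (3 * Real.cos t)]

lemma height_outerMeridian (t : ℝ) : height 0 (outerMeridian t) = 3 * Real.sin t := by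
  simp [height, outerMeridian]

lemma innerMeridian_fst_mem {r : ℝ} (hr : 0 < r) (hexp : Real.exp r < 102 / 100) (t : ℝ) :
    (innerMeridian r t).1 ∈ Ioo (98 / 100 : ℝ) (102 / 100) := by
  have hle : Real.exp (r * Real.cos t) ≤ Real.exp r :=
    Real.exp_le_exp.mpr (mul_le_of_le_one_right hr.le (Real.cos_le_one t))
  have hge : (Real.exp r)⁻¹ ≤ Real.exp (r * Real.cos t) := by
    rw [← Real.exp_neg, Real.exp_le_exp]
    nlinarith [Real.neg_one_le_cos t]
  have hinv : (98 / 100 : ℝ) < (Real.exp r)⁻¹ :=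
    (by norm_num : (98 / 100 : ℝ) < (102 / 100)⁻¹).trans
      (inv_strictAnti₀ (Real.exp_pos r) hexp)
  exact ⟨hinv.trans_le hge, hle.trans_lt hexp⟩

lemma cyl_innerMeridian (r t : ℝ) :
    cyl 0 (innerMeridian r t) = Real.exp (r * Real.cos t) ^ 2 - 1 := by
  simp [cyl, innerMeridian]

lemma cyl_one_innerMeridian_neg {r : ℝ} (hr : 0 < r) (hexp : Real.exp r < 102 / 100) (t : ℝ) :
    cyl 1 (innerMeridian r t) < 0 := by
  obtain ⟨h₁, h₂⟩ := innerMeridian_fst_mem hr hexp t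
  have : (innerMeridian r t).2.re = 0 := rfl
  rw [cyl, this, period_eq]
  push_cast
  nlinarith

lemma height_innerMeridian (k : ℤ) (r t : ℝ) :
    height k (innerMeridian r t) = r * Real.sin t := by
  simp [height, innerMeridian]

lemma cyl_innerLongitude (a t : ℝ) : cyl 0 (innerLongitude a t) = a ^ 2 - 1 := by
  simp only [cyl, innerLongitude]
  push_cast
  linear_combination a ^ 2 * Real.sin_sq_add_cos_sq t

lemma cyl_innerLongitude_pos {a : ℝ} (ha : 1 < a) (t : ℝ) : 0 < cyl 0 (innerLongitude a t) := by
  rw [cyl_innerLongitude, sub_pos]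
  exact one_lt_pow₀ ha two_ne_zero

lemma cyl_one_innerLongitude (a t : ℝ) :
    cyl 1 (innerLongitude a t) = a ^ 2 - 3 * (a * Real.cos t) + 5 / 4 := by
  simp only [cyl, innerLongitude, period_eq]
  push_cast
  linear_combination a ^ 2 * Real.sin_sq_add_cos_sq t

lemma cyl_neg_one_innerLongitude (a t : ℝ) :
    cyl (-1) (innerLongitude a t) = a ^ 2 + 3 * (a * Real.cos t) + 5 / 4 := by
  simp only [cyl, innerLongitude, period_eq]
  push_cast
  linear_combination a ^ 2 * Real.sin_sq_add_cos_sq t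

lemma height_innerLongitude (k : ℤ) (a t : ℝ) :
    height k (innerLongitude a t) = k * (3 / 2) * (a * Real.sin t) := by
  simp only [height, innerLongitude, period_eq]; ring

lemma sheet_innerLongitude_of_cos_nonneg {a : ℝ} (ha₁ : 1 < a) (ha₂ : a < 102 / 100) {t : ℝ}
    (ht : 0 ≤ Real.cos t) : sheet (innerLongitude a t) = 0 := by
  rw [sheet_eq_iff, Int.cast_zero, zero_mul, sub_zero, period_eq, innerLongitude]
  constructor <;> nlinarith [Real.cos_le_one t]

lemma sheet_innerLongitude_pi {a : ℝ} (ha₁ : 1 < a) (ha₂ : a < 102 / 100) :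
    sheet (innerLongitude a Real.pi) = -1 := by
  rw [sheet_eq_iff, period_eq, innerLongitude, Real.cos_pi]
  push_cast
  constructor <;> linarith

namespace LinkRepresentation

variable {G : Type*} [Group G] (ρ : LinkRepresentation G)

lemma hasHolonomy_outerLongitude :
    HasHolonomy ρ.transport (proj ∘ outerLongitude) 0 period ρ.shift := by
  have hcyl (l : ℤ) (t : ℝ) : 0 ≤ cyl l (outerLongitude t) := by
    have : cyl l (outerLongitude t) = (t - l * period) ^ 2 + 8 := by
      simp only [cyl, outerLongitude, Complex.re_ofNat]; ring
    rw [this]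
    positivity
  have hsheet₀ : sheet (outerLongitude 0) = 0 := by simp [sheet, outerLongitude]
  have hsheet₁ : sheet (outerLongitude period) = 1 := by
    simp [sheet, outerLongitude, period_ne_zero]
  have := ρ.hasHolonomy_transport_of_above (k := 0) continuous_outerLongitude
    (Fact.out : 0 < period).le (fun t ht ↦ ?_) (.inl fun t _ ↦ hcyl 0 t) (.inl fun t _ ↦ hcyl _ t)
  · simpa [hsheet₀, hsheet₁] using this
  · obtain ⟨ht₀, ht₁⟩ := ht
    rw [period_eq] at ht₁
    simp only [outerLongitude, Int.cast_zero, zero_mul, sub_zero]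
    constructor <;> linarith

lemma hasHolonomy_outerMeridian :
    HasHolonomy ρ.transport (proj ∘ outerMeridian) 0 (2 * Real.pi) (ρ.bot 0 * (ρ.top 0)⁻¹) := by
  have hpi := Real.pi_pos
  have hband (t) : (outerMeridian t).1 - (0 : ℤ) * period ∈ Ioo (-(1 / 2) : ℝ) 2 := by
    simp [outerMeridian]
  have hend (t) (ht : Real.cos t = 0 ∨ Real.cos t ^ 2 = 1) :
      cyl 0 (outerMeridian t) ≠ 0 ∧ cyl 1 (outerMeridian t) ≠ 0 :=
    ⟨by obtain h | h := ht <;> rw [cyl_outerMeridian, h] <;> norm_num,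
      (cyl_one_outerMeridian_pos t).ne'⟩
  have hupper := ρ.hasHolonomy_transport_of_above (k := 0) continuous_outerMeridian hpi.le
    (fun t _ ↦ hband t)
    (.inr fun t ht ↦ height_outerMeridian t ▸
      mul_nonneg three_pos.le (Real.sin_nonneg_of_mem_Icc ht))
    (.inl fun t _ ↦ (cyl_one_outerMeridian_pos t).le)
  have hleft := ρ.hasHolonomy_transport_of_below (k := 0) (y := false) continuous_outerMeridian
    (a := Real.pi) (b := Real.pi + Real.pi / 2) (by linarith) (fun t _ ↦ hband t)
    (fun t ht ↦ neg_of_nonneg <| neg_nonneg.mpr <| mul_nonpos_of_nonneg_of_nonpos three_pos.le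
      (cos_neg_of_mem_Ioo ⟨by linarith [ht.1], ht.2⟩).le)
    (.inr fun t ht ↦ height_outerMeridian t ▸ mul_neg_of_pos_of_neg three_pos
      (sin_neg_of_mem_Ioo ⟨ht.1, by linarith [ht.2]⟩))
    (.inl fun t _ ↦ (cyl_one_outerMeridian_pos t).le)
    (by
      rintro t (rfl | rfl)
      exacts [hend _ (.inr (by simp)), hend _ (.inl cos_pi_add_pi_div_two)])
  have hright := ρ.hasHolonomy_transport_of_below (k := 0) (y := true) continuous_outerMeridian
    (a := Real.pi + Real.pi / 2) (b := 2 * Real.pi) (by linarith) (fun t _ ↦ hband t)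
    (fun t ht ↦ neg_of_neg <| neg_lt_zero.mpr <| mul_pos three_pos (cos_pos_of_mem_Ioo ht))
    (.inr fun t ht ↦ height_outerMeridian t ▸ mul_neg_of_pos_of_neg three_pos
      (sin_neg_of_mem_Ioo ⟨by linarith [ht.1], ht.2⟩))
    (.inl fun t _ ↦ (cyl_one_outerMeridian_pos t).le)
    (by
      rintro t (rfl | rfl)
      exacts [hend _ (.inl cos_pi_add_pi_div_two), hend _ (.inr (by simp))])
  convert (hupper.trans hleft hpi.le (by linarith)).trans hright (by linarith) (by linarith) using 1
  simp [lowerPotential, table, neg, cyl_outerMeridian, (cyl_one_outerMeridian_pos _).not_gt,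
    sheet_outerMeridian, cos_pi_add_pi_div_two]

lemma hasHolonomy_innerMeridian {r : ℝ} (hr : 0 < r) (hexp : Real.exp r < 102 / 100) :
    HasHolonomy ρ.transport (proj ∘ innerMeridian r) 0 (2 * Real.pi) (ρ.top 0)⁻¹ := by
  have hpi := Real.pi_pos
  have hfst := innerMeridian_fst_mem hr hexp
  have hband (t) : (innerMeridian r t).1 - (0 : ℤ) * period ∈ Ioo (-(1 / 2) : ℝ) 2 := by
    rw [Int.cast_zero, zero_mul, sub_zero]
    constructor <;> linarith [(hfst t).1, (hfst t).2]
  have hsheet (t) : sheet (innerMeridian r t) = 0 := by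
    rw [sheet_eq_iff, Int.cast_zero, zero_mul, sub_zero, period_eq]
    constructor <;> linarith [(hfst t).1, (hfst t).2]
  have hcyl₁ := cyl_one_innerMeridian_neg hr hexp
  have hcylpi : cyl 0 (innerMeridian r Real.pi) < 0 := by
    rw [cyl_innerMeridian, sub_neg, sq_lt_one_iff₀ (Real.exp_pos _).le]
    simpa using hr
  have hcyl2pi : 0 < cyl 0 (innerMeridian r (2 * Real.pi)) := by
    rw [cyl_innerMeridian, sub_pos, one_lt_sq_iff₀ (Real.exp_pos _).le]
    simpa using hr
  have hupper := ρ.hasHolonomy_transport_of_above (k := 0) (continuous_innerMeridian r) hpi.le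
    (fun t _ ↦ hband t)
    (.inr fun t ht ↦ height_innerMeridian 0 r t ▸
      mul_nonneg hr.le (Real.sin_nonneg_of_mem_Icc ht))
    (.inr fun t ht ↦ height_innerMeridian 1 r t ▸
      mul_nonneg hr.le (Real.sin_nonneg_of_mem_Icc ht))
  have hlower := ρ.hasHolonomy_transport_of_below (k := 0) (y := false) (continuous_innerMeridian r)
    (a := Real.pi) (b := 2 * Real.pi) (by linarith) (fun t _ ↦ hband t)
    (fun t _ ↦ neg_of_nonneg neg_zero.ge)
    (.inr fun t ht ↦ height_innerMeridian 0 r t ▸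
      mul_neg_of_pos_of_neg hr (sin_neg_of_mem_Ioo ht))
    (.inr fun t ht ↦ height_innerMeridian 1 r t ▸
      mul_neg_of_pos_of_neg hr (sin_neg_of_mem_Ioo ht))
    (by rintro t (rfl | rfl); exacts [⟨hcylpi.ne, (hcyl₁ _).ne⟩, ⟨hcyl2pi.ne', (hcyl₁ _).ne⟩])
  convert hupper.trans hlower hpi.le (by linarith) using 1
  simp [lowerPotential, table, neg, hcyl₁, hcylpi, hcyl2pi.not_gt, hsheet, ρ.top_eq 0, mul_assoc]

lemma hasHolonomy_innerLongitude_left {a : ℝ} (ha₁ : 1 < a) (ha₂ : a < 102 / 100) :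
    HasHolonomy ρ.transport (proj ∘ innerLongitude a) (Real.pi / 2) (Real.pi + Real.pi / 2)
      (ρ.top (-1)) := by
  have hpi := Real.pi_pos
  have ha₀ : 0 < a := one_pos.trans ha₁
  have hγ := continuous_innerLongitude a
  have hband (t) (ht : Real.cos t ≤ 0) :
      (innerLongitude a t).1 - (-1 : ℤ) * period ∈ Ioo (-(1 / 2) : ℝ) 2 := by
    simp only [innerLongitude, period_eq]
    push_cast
    constructor <;> nlinarith [Real.neg_one_le_cos t]
  have hcyl := cyl_innerLongitude_pos ha₁
  have hcylpi : cyl (-1) (innerLongitude a Real.pi) < 0 := by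
    rw [cyl_neg_one_innerLongitude, Real.cos_pi]; nlinarith
  have hcylpi2 : 0 < cyl (-1) (innerLongitude a (Real.pi / 2)) := by
    rw [cyl_neg_one_innerLongitude, Real.cos_pi_div_two]; positivity
  have hupper := ρ.hasHolonomy_transport_of_below (k := -1) (y := true) hγ
    (a := Real.pi / 2) (b := Real.pi) (by linarith)
    (fun t ht ↦ hband t (Real.cos_nonpos_of_pi_div_two_le_of_le ht.1 (by linarith [ht.2])))
    (fun t ht ↦ neg_of_neg <| neg_lt_zero.mpr <| mul_pos ha₀ <|
      Real.sin_pos_of_pos_of_lt_pi (by linarith [ht.1]) ht.2)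
    (.inr fun t ht ↦ by
      rw [height_innerLongitude]
      refine mul_neg_of_neg_of_pos (by norm_num) (mul_pos ha₀ ?_)
      exact Real.sin_pos_of_pos_of_lt_pi (by linarith [ht.1]) ht.2)
    (.inl fun t _ ↦ (hcyl t).le)
    (by rintro t (rfl | rfl); exacts [⟨hcylpi2.ne', (hcyl _).ne'⟩, ⟨hcylpi.ne, (hcyl _).ne'⟩])
  have hlower := ρ.hasHolonomy_transport_of_above (k := -1) hγ
    (a := Real.pi) (b := Real.pi + Real.pi / 2) (by linarith)
    (fun t ht ↦ hband t (Real.cos_nonpos_of_pi_div_two_le_of_le (by linarith [ht.1])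
      (by linarith [ht.2])))
    (.inr fun t ht ↦ by
      rw [height_innerLongitude]
      refine mul_nonneg_of_nonpos_of_nonpos (by norm_num)
        (mul_nonpos_of_nonneg_of_nonpos ha₀.le (sin_nonpos_of_mem_Icc ⟨ht.1, ?_⟩))
      linarith [ht.2])
    (.inl fun t _ ↦ (hcyl t).le)
  convert hupper.trans hlower (by linarith) (by linarith) using 1
  simp [lowerPotential, table, neg, hcylpi, hcylpi2.not_gt, (hcyl _).not_gt,
    sheet_innerLongitude_pi ha₁ ha₂, sheet_innerLongitude_of_cos_nonneg ha₁ ha₂,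
    cos_pi_add_pi_div_two]

lemma hasHolonomy_innerLongitude {a : ℝ} (ha₁ : 1 < a) (ha₂ : a < 102 / 100) :
    HasHolonomy ρ.transport (proj ∘ innerLongitude a) 0 (2 * Real.pi) (ρ.top (-1) * ρ.bot 1) := by
  have hpi := Real.pi_pos
  have ha₀ : 0 < a := one_pos.trans ha₁
  have hγ := continuous_innerLongitude a
  have hband (t) (ht : 0 ≤ Real.cos t) :
      (innerLongitude a t).1 - (0 : ℤ) * period ∈ Ioo (-(1 / 2) : ℝ) 2 := by
    simp only [innerLongitude]
    push_cast
    constructor <;> nlinarith [Real.cos_le_one t]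
  have hcyl := cyl_innerLongitude_pos ha₁
  have hcyl2pi : cyl 1 (innerLongitude a (2 * Real.pi)) < 0 := by
    rw [cyl_one_innerLongitude, Real.cos_two_pi]; nlinarith
  have hcyl3pi : 0 < cyl 1 (innerLongitude a (Real.pi + Real.pi / 2)) := by
    rw [cyl_one_innerLongitude, cos_pi_add_pi_div_two]; nlinarith
  have hupper := ρ.hasHolonomy_transport_of_above (k := 0) hγ (a := 0) (b := Real.pi / 2)
    (by linarith)
    (fun t ht ↦ hband t (Real.cos_nonneg_of_mem_Icc ⟨by linarith [ht.1], ht.2⟩))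
    (.inl fun t _ ↦ (hcyl t).le)
    (.inr fun t ht ↦ by
      rw [height_innerLongitude]
      refine mul_nonneg (by norm_num) (mul_nonneg ha₀.le ?_)
      exact Real.sin_nonneg_of_nonneg_of_le_pi ht.1 (by linarith [ht.2]))
  have hlower := ρ.hasHolonomy_transport_of_below (k := 0) (y := false) hγ
    (a := Real.pi + Real.pi / 2) (b := 2 * Real.pi) (by linarith)
    (fun t ht ↦ hband t (cos_nonneg_of_mem_Icc ht))
    (fun t ht ↦ neg_of_nonneg <| neg_nonneg.mpr <| mul_nonpos_of_nonneg_of_nonpos ha₀.le <|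
      sin_nonpos_of_mem_Icc ⟨by linarith [ht.1], ht.2.le⟩)
    (.inl fun t _ ↦ (hcyl t).le)
    (.inr fun t ht ↦ by
      rw [height_innerLongitude]
      refine mul_neg_of_pos_of_neg (by norm_num) (mul_neg_of_pos_of_neg ha₀ ?_)
      exact sin_neg_of_mem_Ioo ⟨by linarith [ht.1], ht.2⟩)
    (by rintro t (rfl | rfl); exacts [⟨(hcyl _).ne', hcyl3pi.ne'⟩, ⟨(hcyl _).ne', hcyl2pi.ne⟩])
  convert (hupper.trans (ρ.hasHolonomy_innerLongitude_left ha₁ ha₂) (by linarith)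
    (by linarith)).trans hlower (by linarith) (by linarith) using 1
  simp [lowerPotential, table, neg, hcyl2pi, hcyl3pi.not_gt, (hcyl _).not_gt,
    sheet_innerLongitude_of_cos_nonneg ha₁ ha₂, cos_pi_add_pi_div_two]

end LinkRepresentation

end Whitehead

/-! ### Gauge transformations between consecutive solid tori -/

namespace HasHolonomy

variable {G X : Type*} [Group G] {c : X → X → G} {a b : ℝ} {g : G}

lemma comp_mul {γ : ℝ → X} {r : ℝ} (hr : 0 < r) (h : HasHolonomy c γ (r * a) (r * b) g) :
    HasHolonomy c (fun t ↦ γ (r * t)) a b g := fun τ hτ ↦ by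
  have hmaps : MapsTo (fun s ↦ r⁻¹ * s) (Icc (r * a) (r * b)) (Icc a b) := fun s hs ↦
    ⟨(le_inv_mul_iff₀ hr).mpr hs.1, (inv_mul_le_iff₀ hr).mpr hs.2⟩
  have hσ := hτ.comp (continuous_const_mul r⁻¹).continuousOn hmaps
  simp only [mul_inv_cancel_left₀ hr.ne'] at hσ
  simpa only [inv_mul_cancel_left₀ hr.ne'] using h _ hσ

lemma potential_add {E : Type*} [TopologicalSpace E] [PreconnectedSpace E] [AddZeroClass E]
    [ContinuousAdd E] {Φ : E → X} {τ : E → G}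
    (hτ : IsLocalPotentialOn (fun P Q ↦ c (Φ P) (Φ Q)) τ univ) (hτ₀ : τ 0 = 1) {γ : ℝ → E}
    (hγ : Continuous γ) (hγ₀ : γ a = 0) (h : HasHolonomy c (Φ ∘ γ) a b g)
    (hper : ∀ P, Φ (P + γ b) = Φ P) (P : E) : τ (P + γ b) = g * τ P := by
  have hend : τ (γ b) = g := by
    simpa [hγ₀, hτ₀] using h _ (hτ.comp hγ.continuousOn (mapsTo_univ _ _))
  have hadd : IsLocalPotentialOn (fun P Q ↦ c (Φ P) (Φ Q)) (fun P ↦ τ (P + γ b)) univ := by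
    simpa only [hper] using hτ.comp (continuous_add_const (γ b)).continuousOn (mapsTo_univ _ univ)
  have := hadd.mul_inv_eq_mul_inv hτ isPreconnected_univ (mem_univ P) (mem_univ 0)
  rwa [zero_add, hend, hτ₀, inv_one, mul_one, mul_inv_eq_iff_eq_mul] at this

end HasHolonomy

namespace Whitehead

/-- An embedding of the line in the interval between `log 2` and `log (9 / 2)`. -/
noncomputable def logRadius : ℝ → ℝ :=
  OpenPartialHomeomorph.univBall (Real.log 3) (Real.log (3 / 2))

lemma isOpenEmbedding_logRadius : IsOpenEmbedding logRadius :=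
  OpenPartialHomeomorph.isOpenEmbedding _ (OpenPartialHomeomorph.univBall_source _ _)

lemma logRadius_zero : logRadius 0 = Real.log 3 := OpenPartialHomeomorph.univBall_apply_zero _ _

lemma log_two_lt_logRadius (r : ℝ) : Real.log 2 < logRadius r := by
  have hmem : logRadius r ∈ Metric.ball (Real.log 3) (Real.log (3 / 2)) := by
    rw [← OpenPartialHomeomorph.univBall_target _ (Real.log_pos (by norm_num))]
    exact OpenPartialHomeomorph.map_source _ (by simp)
  rw [mem_ball_iff_norm, Real.norm_eq_abs, Real.log_div three_ne_zero two_ne_zero] at hmem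
  linarith [(abs_lt.mp hmem).1]

/-- The universal covering, with coordinates longitude, radius and angle, of a neighbourhood of the
torus of radius three. -/
noncomputable def collar (P : ℝ × ℝ × ℝ) : SolidTorus :=
  proj (P.1, Complex.exp ⟨logRadius P.2.1, P.2.2⟩)

lemma continuous_collar : Continuous collar := by
  have := isOpenEmbedding_logRadius.continuous
  exact continuous_proj.comp (by fun_prop)

lemma isOpenMap_collar : IsOpenMap collar :=
  isOpenMap_proj.comp (IsOpenMap.id.prodMap (Complex.isOpenMap_exp.comp
    (Complex.equivRealProdCLM.symm.toHomeomorph.isOpenMap.comp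
      (isOpenEmbedding_logRadius.isOpenMap.prodMap .id))))

lemma norm_collar_snd (P : ℝ × ℝ × ℝ) : ‖(collar P).2‖ = Real.exp (logRadius P.2.1) := by
  simp [collar, proj, Complex.norm_exp]

lemma two_lt_norm_collar_snd (P : ℝ × ℝ × ℝ) : 2 < ‖(collar P).2‖ := by
  rw [norm_collar_snd, ← Real.log_lt_iff_lt_exp two_pos]
  exact log_two_lt_logRadius _

lemma exists_eq_add_of_collar_eq {P Q : ℝ × ℝ × ℝ} (h : collar P = collar Q) :
    ∃ i j : ℤ, Q = P + i • (period, 0, 0) + j • (0, 0, 2 * Real.pi) := by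
  have hradius : P.2.1 = Q.2.1 := by
    have := congrArg (fun p : SolidTorus ↦ ‖p.2‖) h
    simp only [norm_collar_snd] at this
    exact isOpenEmbedding_logRadius.injective (Real.exp_injective this)
  obtain ⟨i, hi⟩ := proj_eq_proj_iff.mp h
  obtain ⟨hlong, hexp⟩ := Prod.mk.inj hi
  obtain ⟨j, hj⟩ := Complex.exp_eq_exp_iff_exists_int.mp hexp
  have hangle : Q.2.2 = P.2.2 + j * (2 * Real.pi) := by simpa using congrArg Complex.im hj
  refine ⟨i, j, Prod.ext ?_ (Prod.ext ?_ ?_)⟩ <;> simp [hlong, hradius, hangle]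

lemma exists_collar_eq {p : SolidTorus} (hp : ‖p.2‖ = 3) : ∃ P, collar P = p := by
  obtain ⟨⟨x, w⟩, rfl⟩ := surjective_proj p
  refine ⟨(x, 0, w.arg), congrArg (fun z ↦ proj (x, z)) ?_⟩
  have hw : ‖w‖ = 3 := hp
  have hw₀ : w ≠ 0 := norm_pos_iff.mp (hw ▸ three_pos)
  rw [logRadius_zero, ← hw, Complex.mk_eq_add_mul_I]
  exact Complex.exp_log hw₀

lemma collar_add_period (P : ℝ × ℝ × ℝ) : collar (P + (period, 0, 0)) = collar P := by
  simp [collar, proj]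

lemma collar_add_two_pi (P : ℝ × ℝ × ℝ) : collar (P + (0, 0, 2 * Real.pi)) = collar P := by
  have : (⟨logRadius P.2.1, P.2.2 + 2 * Real.pi⟩ : ℂ) =
      ⟨logRadius P.2.1, P.2.2⟩ + 2 * Real.pi * Complex.I := by
    apply Complex.ext <;> simp
  simp [collar, this, Complex.exp_periodic _]

lemma collar_zero (x φ : ℝ) :
    collar (x, 0, φ) = proj (x, ⟨3 * Real.cos φ, 3 * Real.sin φ⟩) := by
  rw [collar, logRadius_zero]
  congr 2
  apply Complex.ext <;> simp [Complex.exp_re, Complex.exp_im, Real.exp_log]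

/-- On the universal covering of the collar both cocycles have potentials, and the quotient of the
potentials descends because conjugation by `K` matches the holonomies. -/
theorem exists_gauge {G : Type*} [Group G] {c c' : SolidTorus → SolidTorus → G}
    (hc : IsLocalCocycleOn c {p | 2 < ‖p.2‖}) (hc' : IsLocalCocycleOn c' {p | 2 < ‖p.2‖})
    {l m l' m' K : G} (hl : HasHolonomy c (fun t ↦ collar (t, 0, 0)) 0 period l)
    (hm : HasHolonomy c (fun t ↦ collar (0, 0, t)) 0 (2 * Real.pi) m)
    (hl' : HasHolonomy c' (fun t ↦ collar (t, 0, 0)) 0 period l')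
    (hm' : HasHolonomy c' (fun t ↦ collar (0, 0, t)) 0 (2 * Real.pi) m')
    (hKl : K * l * K⁻¹ = l') (hKm : K * m * K⁻¹ = m') :
    ∃ g : SolidTorus → G, ∀ p, ‖p.2‖ = 3 →
      ∃ U ∈ 𝓝 p, ∀ p ∈ U, ∀ q ∈ U, c' p q = (g p)⁻¹ * c p q * g q := by
  obtain ⟨τ, hτ, hτ₀⟩ := (hc.comp continuous_collar.continuousOn
    fun P _ ↦ two_lt_norm_collar_snd P).exists_potential_univ
  obtain ⟨υ, hυ, hυ₀⟩ := (hc'.comp continuous_collar.continuousOn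
    fun P _ ↦ two_lt_norm_collar_snd P).exists_potential_univ
  let g (P : ℝ × ℝ × ℝ) : G := (τ P)⁻¹ * K⁻¹ * υ P
  have hlong : Function.Periodic g (period, 0, 0) := fun P ↦ by
    have hcont : Continuous fun t : ℝ ↦ ((t, 0, 0) : ℝ × ℝ × ℝ) := by fun_prop
    simp only [g, hl.potential_add hτ hτ₀ hcont rfl collar_add_period P,
      hl'.potential_add hυ hυ₀ hcont rfl collar_add_period P, ← hKl]
    group
  have hmer : Function.Periodic g (0, 0, 2 * Real.pi) := fun P ↦ by
    have hcont : Continuous fun t : ℝ ↦ ((0, 0, t) : ℝ × ℝ × ℝ) := by fun_prop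
    simp only [g, hm.potential_add hτ hτ₀ hcont rfl collar_add_two_pi P,
      hm'.potential_add hυ hυ₀ hcont rfl collar_add_two_pi P, ← hKm]
    group
  have hfactors : g.FactorsThrough collar := fun P Q h ↦ by
    obtain ⟨i, j, rfl⟩ := exists_eq_add_of_collar_eq h
    rw [hmer.zsmul j, hlong.zsmul i]
  refine ⟨Function.extend collar g 1, fun p hp ↦ ?_⟩
  obtain ⟨P, rfl⟩ := exists_collar_eq hp
  obtain ⟨U, hU, hUτ⟩ := hτ P (mem_univ P)
  obtain ⟨V, hV, hVυ⟩ := hυ P (mem_univ P)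
  rw [nhdsWithin_univ] at hU hV
  refine ⟨collar '' (U ∩ V), isOpenMap_collar.image_mem_nhds (inter_mem hU hV), ?_⟩
  rintro _ ⟨Q, ⟨hQU, hQV⟩, rfl⟩ _ ⟨R, ⟨hRU, hRV⟩, rfl⟩
  beta_reduce at hUτ hVυ
  rw [hfactors.extend_apply, hfactors.extend_apply, hUτ Q hQU R hRU, hVυ Q hQV R hRV]
  simp only [g]
  group

lemma embedding_notMem_image_core {p : SolidTorus} (hp : p.2 ≠ 0) :
    embedding p ∉ embedding '' core :=
  fun h ↦ hp (embedding_injective.mem_set_image.mp h)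

lemma notMem_image_core {p : SolidTorus} (hp : 2 ≤ ‖p.2‖) : p ∉ embedding '' core := by
  rintro ⟨q, -, rfl⟩
  exact (norm_embedding_snd_lt q).not_ge hp

/-- The radius of the image under `squash` of the circle of radius three. -/
noncomputable def innerRadius : ℝ := 1 / 100 * (√(1 + 3 ^ 2))⁻¹ * 3

lemma innerRadius_pos : 0 < innerRadius := by unfold innerRadius; positivity

lemma norm_three_cos_sin (φ : ℝ) : ‖(⟨3 * Real.cos φ, 3 * Real.sin φ⟩ : ℂ)‖ = 3 := by
  rw [← sq_eq_sq₀ (norm_nonneg _) three_pos.le, Complex.sq_norm, Complex.normSq_mk]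
  linear_combination 9 * Real.sin_sq_add_cos_sq φ

lemma squash_three_cos_sin (φ : ℝ) :
    squash ⟨3 * Real.cos φ, 3 * Real.sin φ⟩ =
      ⟨innerRadius * Real.cos φ, innerRadius * Real.sin φ⟩ := by
  rw [squash_apply, norm_three_cos_sin]
  apply Complex.ext
  · rw [Complex.re_ofReal_mul, innerRadius]; ring
  · rw [Complex.im_ofReal_mul, innerRadius]; ring

lemma one_lt_exp_innerRadius : 1 < Real.exp innerRadius := Real.one_lt_exp_iff.mpr innerRadius_pos

lemma exp_innerRadius_lt : Real.exp innerRadius < 102 / 100 := by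
  have := (exp_squash_re_mem_Ioo ⟨3 * Real.cos 0, 3 * Real.sin 0⟩).2
  rwa [squash_three_cos_sin, Real.cos_zero, mul_one] at this

lemma embedding_collar (x φ : ℝ) :
    embedding (collar (x, 0, φ)) = proj (clasp
      (Complex.exp ⟨innerRadius * Real.cos φ, 2 * Real.pi / period * x⟩,
        innerRadius * Real.sin φ)) := by
  rw [collar_zero, embedding, lift, annulus_proj]
  simp only [proj, squash_three_cos_sin]

lemma embedding_collar_meridian (φ : ℝ) :
    embedding (collar (0, 0, φ)) = proj (innerMeridian innerRadius φ) := by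
  simp [embedding_collar, clasp, innerMeridian, Complex.exp_re, Complex.exp_im]

lemma embedding_collar_longitude (t : ℝ) :
    embedding (collar (t, 0, 0)) =
      proj (innerLongitude (Real.exp innerRadius) (2 * Real.pi / period * t)) := by
  simp [embedding_collar, clasp, innerLongitude, Complex.exp_re, Complex.exp_im]

lemma collar_meridian (φ : ℝ) : collar (0, 0, φ) = proj (outerMeridian φ) := collar_zero 0 φ

lemma collar_longitude (t : ℝ) : collar (t, 0, 0) = proj (outerLongitude t) := by
  rw [collar_zero, Real.cos_zero, Real.sin_zero, mul_one, mul_zero]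
  rfl

namespace LinkRepresentation

variable {G : Type*} [Group G] (ρ : LinkRepresentation G)

/-- `K` conjugates the holonomies on the outer boundary of the complement of the link into those on
its inner boundary, so the flat bundles on consecutive complements can be glued. -/
def IsMatching (K : G) : Prop :=
  K * ρ.shift * K⁻¹ = ρ.top (-1) * ρ.bot 1 ∧ K * (ρ.bot 0 * (ρ.top 0)⁻¹) * K⁻¹ = (ρ.top 0)⁻¹

variable {ρ}

theorem IsMatching.exists_gauge {K : G} (hK : ρ.IsMatching K) :
    ∃ g : SolidTorus → G, ∀ p, ‖p.2‖ = 3 → ∃ U ∈ 𝓝 p, ∀ p ∈ U, ∀ q ∈ U,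
      ρ.transport (embedding p) (embedding q) = (g p)⁻¹ * ρ.transport p q * g q := by
  refine Whitehead.exists_gauge (c' := fun p q ↦ ρ.transport (embedding p) (embedding q))
    (ρ.isLocalCocycleOn_transport.comp continuousOn_id fun p hp ↦ notMem_image_core (le_of_lt hp))
    (ρ.isLocalCocycleOn_transport.comp continuous_embedding.continuousOn fun p hp ↦
      embedding_notMem_image_core (norm_pos_iff.mp (two_pos.trans hp)))
    (l := ρ.shift) ?_ ?_ (l' := ρ.top (-1) * ρ.bot 1) ?_ ?_ hK.1 hK.2
  · simpa only [collar_longitude, Function.comp_def] using ρ.hasHolonomy_outerLongitude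
  · simpa only [collar_meridian, Function.comp_def] using ρ.hasHolonomy_outerMeridian
  · have hinner := ρ.hasHolonomy_innerLongitude one_lt_exp_innerRadius exp_innerRadius_lt
    intro τ hτ
    simp only [embedding_collar_longitude] at hτ
    refine HasHolonomy.comp_mul (γ := proj ∘ innerLongitude (Real.exp innerRadius))
      (div_pos Real.two_pi_pos Fact.out) ?_ τ hτ
    rwa [mul_zero, div_mul_cancel₀ _ period_ne_zero]
  · intro τ hτ
    simp only [embedding_collar_meridian] at hτ
    exact ρ.hasHolonomy_innerMeridian innerRadius_pos exp_innerRadius_lt τ hτ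

end LinkRepresentation

end Whitehead

/-! ### Gluing flat bundles along a telescope -/

namespace Telescope

universe u

variable {T : Type u} {h : T → T} {D : Set T} {m : ℕ} {a b : T} {p : Telescope h}

/-- The number of the first copy of `D` in the telescope which contains the given point. -/
noncomputable def level (D : Set T) (p : Telescope h) : ℕ := sInf {m | p ∈ of h m '' D}

lemma mem_image_of_level (hD : range h ⊆ D) (p : Telescope h) : p ∈ of h (level D p) '' D := by
  obtain ⟨n, x, rfl⟩ := exists_of p
  exact Nat.sInf_mem (s := {m | of h n x ∈ of h m '' D})
    ⟨n + 1, h x, hD (mem_range_self x), of_succ n x⟩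

lemma level_of_le (ha : a ∈ D) : level D (of h m a) ≤ m := Nat.sInf_le ⟨a, ha, rfl⟩

lemma le_level_iff (hD : range h ⊆ D) : m ≤ level D p ↔ ∀ i < m, p ∉ of h i '' D :=
  ⟨fun hm _ hi hp ↦ (hm.trans (Nat.sInf_le hp)).not_gt hi,
    fun hm ↦ not_lt.mp fun hlt ↦ hm _ hlt (mem_image_of_level hD p)⟩

lemma le_level_of (hi : h.Injective) (hD : range h ⊆ D) (ha : a ∉ range h) :
    m ≤ level D (of h m a) := by
  refine (le_level_iff hD).mpr fun i him ⟨x, _, hx⟩ ↦ ha ?_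
  obtain ⟨k, rfl⟩ := Nat.exists_eq_add_of_lt him
  rw [← of_add i (k + 1) x, ← add_assoc, Function.iterate_succ_apply'] at hx
  exact ⟨_, of_injective hi _ hx⟩

lemma level_of_of_notMem (hi : h.Injective) (hD : range h ⊆ D) (ha : a ∉ D)
    (hm : m ≤ level D (of h m a)) : level D (of h m a) = m + 1 := by
  refine le_antisymm (of_succ m a ▸ level_of_le (hD (mem_range_self a))) (hm.lt_of_ne fun hm ↦ ?_)
  obtain ⟨x, hx, hxa⟩ := mem_image_of_level hD (of h m a)
  rw [← hm] at hxa
  exact ha (of_injective hi m hxa ▸ hx)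

lemma isOpen_setOf_le_level [TopologicalSpace T] [T2Space T] (ho : IsOpenEmbedding h)
    (hD : range h ⊆ D) (hDc : IsCompact D) (m : ℕ) :
    IsOpen {p : Telescope h | m ≤ level D p} := by
  have := t2Space ho
  have hclosed : IsClosed (⋃ i ∈ Finset.range m, of h i '' D) :=
    isClosed_biUnion_finset fun i _ ↦ (hDc.image (isOpenEmbedding_of ho i).continuous).isClosed
  convert hclosed.isOpen_compl using 1
  ext p
  simp [le_level_iff hD]

variable {G : Type*} [Group G] [Nonempty T] {c : T → T → G} {g : T → G}

/-- The transport of a flat bundle on the telescope, assembled from copies of the transport `c` on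
each stage `of h m '' D` minus the previous ones. The function `g` is the gauge transformation
between the bundle on a stage and the one on the next stage; it is applied to the points which lie
outside `D` in the coordinates of the earlier of the two stages. -/
noncomputable def glue (D : Set T) (c : T → T → G) (g : T → G) (p q : Telescope h) : G :=
  let coord : Telescope h → T := Function.invFun (of h (min (level D p) (level D q)))
  (Dᶜ.mulIndicator g (coord p))⁻¹ * c (coord p) (coord q) * Dᶜ.mulIndicator g (coord q)

lemma glue_of (hi : h.Injective) (hD : range h ⊆ D) (ha : m ≤ level D (of h m a))
    (hb : m ≤ level D (of h m b))
    (hg : a ∉ D → b ∉ D → c (h a) (h b) = (g a)⁻¹ * c a b * g b) :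
    glue D c g (of h m a) (of h m b) =
      (Dᶜ.mulIndicator g a)⁻¹ * c a b * Dᶜ.mulIndicator g b := by
  have hcoord (n : ℕ) (x : T) : Function.invFun (of h n) (of h n x) = x :=
    Function.leftInverse_invFun (of_injective hi n) x
  have hmin (hab : a ∈ D ∨ b ∈ D) : min (level D (of h m a)) (level D (of h m b)) = m := by
    refine le_antisymm ?_ (le_min ha hb)
    exact min_le_iff.mpr (hab.imp level_of_le level_of_le)
  by_cases hab : a ∈ D ∨ b ∈ D
  · simp only [glue, hmin hab, hcoord]
  · obtain ⟨ha', hb'⟩ := not_or.mp hab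
    simp only [glue, level_of_of_notMem hi hD ha' ha, level_of_of_notMem hi hD hb' hb, min_self]
    have hD' (x : T) : h x ∉ Dᶜ := not_not.mpr (hD (mem_range_self x))
    rw [← of_succ m a, ← of_succ m b, hcoord, hcoord, mulIndicator_of_notMem (hD' a),
      mulIndicator_of_notMem (hD' b), mulIndicator_of_mem (mem_compl ha'),
      mulIndicator_of_mem (mem_compl hb'), hg ha' hb', inv_one, one_mul, mul_one]

theorem isLocalCocycleOn_glue [TopologicalSpace T] [T2Space T] (ho : IsOpenEmbedding h)
    (hD : range h ⊆ D) (hDc : IsCompact D) {K : Set T} (hK : IsClosed K) (hKD : K ⊆ h '' D)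
    (hc : IsLocalCocycleOn c Kᶜ) (hg : ∀ p ∈ frontier D, ∃ U ∈ 𝓝 p, ∀ p ∈ U, ∀ q ∈ U,
      c (h p) (h q) = (g p)⁻¹ * c p q * g q) :
    IsLocalCocycleOn (glue (h := h) D c g) (of h 0 '' K)ᶜ := by
  intro p hp
  obtain ⟨a, haD, hap⟩ := mem_image_of_level hD p
  obtain ⟨m, hm⟩ : ∃ m, m = level D p := ⟨_, rfl⟩
  rw [← hm] at hap
  have haK : a ∉ K := fun haK ↦ by
    cases m with
    | zero => exact hp ⟨a, haK, hap⟩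
    | succ n =>
      obtain ⟨x, hx, rfl⟩ := hKD haK
      rw [of_succ] at hap
      exact (le_level_iff hD).mp hm.le n n.lt_succ_self ⟨x, hx, hap⟩
  obtain ⟨U, hU, hUc⟩ := hc a haK
  rw [hK.isOpen_compl.nhdsWithin_eq haK] at hU
  obtain ⟨V, hV, hVg⟩ : ∃ V ∈ 𝓝 a, ∀ x ∈ V, ∀ y ∈ V, x ∉ D → y ∉ D →
      c (h x) (h y) = (g x)⁻¹ * c x y * g y := by
    by_cases ha : a ∈ interior D
    · exact ⟨D, mem_interior_iff_mem_nhds.mp ha, fun x hx _ _ hxD ↦ absurd hx hxD⟩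
    · obtain ⟨V, hV, hVg⟩ := hg a ⟨subset_closure haD, ha⟩
      exact ⟨V, hV, fun x hx y hy _ _ ↦ hVg x hx y hy⟩
  have hW : of h m ⁻¹' {p | m ≤ level D p} ∈ 𝓝 a :=
    (isOpenEmbedding_of ho m).continuous.continuousAt.preimage_mem_nhds
      ((isOpen_setOf_le_level ho hD hDc m).mem_nhds (hap.symm ▸ hm.le))
  refine ⟨of h m '' (U ∩ V ∩ of h m ⁻¹' {p | m ≤ level D p}), mem_nhdsWithin_of_mem_nhds (hap ▸
    (isOpenEmbedding_of ho m).isOpenMap.image_mem_nhds (inter_mem (inter_mem hU hV) hW)), ?_⟩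
  rintro _ ⟨x, ⟨⟨hxU, hxV⟩, hx⟩, rfl⟩ _ ⟨y, ⟨⟨hyU, hyV⟩, hy⟩, rfl⟩ _ ⟨z, ⟨⟨hzU, hzV⟩, hz⟩, rfl⟩
  have hi := ho.injective
  rw [glue_of hi hD hx hy (hVg x hxV y hyV), glue_of hi hD hy hz (hVg y hyV z hzV),
    glue_of hi hD hx hz (hVg x hxV z hzV), ← hUc x hxU y hyU z hzU]
  group

end Telescope

/-! ### The Whitehead manifold is not simply connected at infinity -/

lemma HasHolonomy.eq_one_of_convex {X G E : Type*} [TopologicalSpace X] [Group G]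
    [NormedAddCommGroup E] [NormedSpace ℝ E] {c : X → X → G} {S : Set X}
    (hc : IsLocalCocycleOn c S) {Ω : Set E} (hΩ : IsCompact Ω) (hconv : Convex ℝ Ω) {H : Ω → X}
    (hH : Continuous H) (hHS : ∀ z, H z ∈ S) {γ : ℝ → Ω} (hγ : Continuous γ) {a b : ℝ}
    (hγab : γ a = γ b) {g : G} (h : HasHolonomy c (H ∘ γ) a b g) : g = 1 := by
  let F : E → X := Function.extend Subtype.val H fun _ ↦ H (γ a)
  have hF (z : Ω) : F z = H z := Subtype.val_injective.extend_apply _ _ z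
  have hFcont : ContinuousOn F Ω := by
    rw [continuousOn_iff_continuous_domRestrict]
    exact hH.congr fun z ↦ (hF z).symm
  obtain ⟨τ, hτ⟩ := (hc.comp hFcont fun z hz ↦ hF ⟨z, hz⟩ ▸ hHS _).exists_potential_of_convex
    hΩ hconv
  have hτγ := hτ.comp (T := Icc a b) (continuous_subtype_val.comp hγ).continuousOn
    fun t _ ↦ (γ t).2
  simp only [Function.comp_apply, hF] at hτγ
  have := h _ hτγ
  rwa [hγab, left_eq_mul] at this

lemma SimplyConnectedAtInfinity.of_compactSpace {X : Type*} [TopologicalSpace X] [CompactSpace X] :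
    SimplyConnectedAtInfinity X :=
  fun _ _ ↦ ⟨univ, isCompact_univ, subset_univ _, fun _ _ hγ ↦
    absurd (mem_univ _) (hγ ⟨!₂[1, 0], by simp [EuclideanSpace.norm_eq]⟩)⟩

lemma contractibleSpace_of_prod {X Y : Type*} [TopologicalSpace X] [TopologicalSpace Y]
    [hXY : ContractibleSpace (X × Y)] : ContractibleSpace X := by
  obtain ⟨p⟩ := (inferInstance : Nonempty (X × Y))
  exact (contractible_iff_id_nullhomotopic X).mpr
    (((id_nullhomotopic (X × Y)).comp_left (.prodMk (.id X) (.const X p.2))).comp_right .fst)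

namespace Whitehead

lemma isCompact_setOf_norm_snd_le (r : ℝ) : IsCompact {p : SolidTorus | ‖p.2‖ ≤ r} := by
  convert (isCompact_univ (X := AddCircle period)).prod (isCompact_closedBall (0 : ℂ) r)
  ext
  simp

lemma isCompact_image_core : IsCompact (embedding '' core) := by
  refine IsCompact.image ?_ continuous_embedding
  simpa [core] using isCompact_setOf_norm_snd_le 0

lemma range_embedding_subset_setOf_norm_snd_lt : range embedding ⊆ {p | ‖p.2‖ < 3} := by
  rintro _ ⟨p, rfl⟩
  exact (norm_embedding_snd_lt p).trans (by norm_num)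

lemma range_embedding_subset_setOf_norm_snd_le : range embedding ⊆ {p | ‖p.2‖ ≤ 3} :=
  range_embedding_subset_setOf_norm_snd_lt.trans fun _ ↦ le_of_lt (α := ℝ)

lemma proj_outerMeridian (t : ℝ) :
    proj (outerMeridian t) = proj (0, 3 * Complex.exp (t * Complex.I)) := by
  rw [outerMeridian, Complex.exp_mul_I]
  congr 2
  apply Complex.ext <;> simp [← Complex.ofReal_cos, ← Complex.ofReal_sin]

namespace LinkRepresentation

variable {G : Type*} [Group G] {ρ : LinkRepresentation G} {K : G}

theorem IsMatching.exists_isLocalCocycleOn (hK : ρ.IsMatching K) :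
    ∃ c : WhiteheadManifold → WhiteheadManifold → G,
      IsLocalCocycleOn c (Telescope.of embedding 0 '' (embedding '' core))ᶜ ∧
      ∀ n, HasHolonomy c (Telescope.of embedding n ∘ proj ∘ outerMeridian) 0 (2 * Real.pi)
        (ρ.bot 0 * (ρ.top 0)⁻¹) := by
  obtain ⟨g, hg⟩ := hK.exists_gauge
  refine ⟨Telescope.glue {p | ‖p.2‖ ≤ 3} ρ.transport g,
    Telescope.isLocalCocycleOn_glue isOpenEmbedding_embedding
      range_embedding_subset_setOf_norm_snd_le (isCompact_setOf_norm_snd_le 3)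
      isCompact_image_core.isClosed (image_mono fun p hp ↦ ?_) ρ.isLocalCocycleOn_transport
      fun p hp ↦ hg p ?_, fun n τ hτ ↦ ρ.hasHolonomy_outerMeridian τ ?_⟩
  · rw [mem_ofPred_eq, show p.2 = 0 from hp, norm_zero]
    exact three_pos.le
  · exact frontier_le_subset_eq continuous_snd.norm continuous_const hp
  · have hnorm (t : ℝ) : ‖(proj (outerMeridian t)).2‖ = 3 := norm_three_cos_sin t
    have hlevel (t : ℝ) : n ≤ Telescope.level {p : SolidTorus | ‖p.2‖ ≤ 3}
        (Telescope.of embedding n (proj (outerMeridian t))) :=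
      Telescope.le_level_of embedding_injective range_embedding_subset_setOf_norm_snd_le fun h ↦
        (range_embedding_subset_setOf_norm_snd_lt h).ne (hnorm t)
    have hmem (t : ℝ) : proj (outerMeridian t) ∉ {p : SolidTorus | ‖p.2‖ ≤ 3}ᶜ :=
      not_not.mpr (hnorm t).le
    simpa only [Function.comp_apply, Telescope.glue_of embedding_injective
      range_embedding_subset_setOf_norm_snd_le (hlevel _) (hlevel _) fun h ↦ absurd h (hmem _),
      mulIndicator_of_notMem (hmem _), inv_one, one_mul, mul_one] using hτ

theorem IsMatching.not_simplyConnectedAtInfinity (hK : ρ.IsMatching K) (hρ : ρ.upper ≠ 1) :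
    ¬ SimplyConnectedAtInfinity WhiteheadManifold := by
  intro hW
  obtain ⟨c, hc, hhol⟩ := hK.exists_isLocalCocycleOn
  have hof (n : ℕ) := Telescope.isOpenEmbedding_of isOpenEmbedding_embedding n
  obtain ⟨C, hC, -, hloop⟩ := hW _ (isCompact_image_core.image (hof 0).continuous)
  obtain ⟨n, hn⟩ := Telescope.exists_subset_image_of (isOpen_lt (by fun_prop) continuous_const)
    range_embedding_subset_setOf_norm_snd_lt isOpenEmbedding_embedding hC
  let e : ℂ ≃ₗᵢ[ℝ] EuclideanSpace ℝ (Fin 2) := Complex.orthonormalBasisOneI.repr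
  obtain ⟨H, hH, hHcore, hHγ⟩ := hloop
    (fun z ↦ Telescope.of embedding n (proj (0, 3 * e.symm z)))
    ((hof n).continuous.comp (continuous_proj.comp (by fun_prop))) fun z hz ↦ by
      obtain ⟨x, hx, hxz⟩ := hn hz
      rw [(hof n).injective hxz] at hx
      simp [proj] at hx
  have hcircle (t : ℝ) : e (Complex.exp (t * Complex.I)) ∈ Metric.sphere 0 1 := by
    simp [Complex.norm_exp_ofReal_mul_I]
  let γ (t : ℝ) : Metric.closedBall (0 : EuclideanSpace ℝ (Fin 2)) 1 :=
    ⟨e (Complex.exp (t * Complex.I)), Metric.sphere_subset_closedBall (hcircle t)⟩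
  have hγ : H ∘ γ = Telescope.of embedding n ∘ proj ∘ outerMeridian := funext fun t ↦ by
    simp only [Function.comp_apply, γ, hHγ _ (hcircle t), e.symm_apply_apply, proj_outerMeridian]
  have hone := HasHolonomy.eq_one_of_convex hc (isCompact_closedBall _ _) (convex_closedBall _ _)
    hH hHcore (γ := γ) (by fun_prop) (by simp [γ, Complex.exp_two_pi_mul_I]) (hγ ▸ hhol n)
  have htop := hK.2
  rw [hone, mul_one, mul_inv_cancel, eq_comm, inv_eq_one] at htop
  exact hρ (by simpa [top] using htop)

/-- The representation of the link group in the symmetric group of degree five from which the flat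
bundle on the Whitehead manifold is built. -/
def perm : LinkRepresentation (Equiv.Perm (Fin 5)) where
  upper := c[0, 1, 2, 3, 4]
  lower := c[0, 3, 2, 4, 1]
  shift := c[0, 2, 4, 3, 1]
  shift_conj_lower := by decide +kernel
  upper_eq := by decide +kernel

lemma isMatching_perm : perm.IsMatching c[1, 4, 2] := by
  constructor <;> decide +kernel

end LinkRepresentation

end Whitehead

namespace WhiteheadManifold

open Whitehead

theorem not_simplyConnectedAtInfinity : ¬ SimplyConnectedAtInfinity WhiteheadManifold :=
  LinkRepresentation.isMatching_perm.not_simplyConnectedAtInfinity (by decide +kernel)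

instance : NoncompactSpace WhiteheadManifold :=
  not_compactSpace_iff.mp fun _ ↦ not_simplyConnectedAtInfinity .of_compactSpace

instance : ContractibleSpace WhiteheadManifold :=
  have : ContractibleSpace (WhiteheadManifold × ℝ) :=
    nonempty_prod_real_homeomorph.some.contractibleSpace
  contractibleSpace_of_prod (Y := ℝ)

noncomputable instance : ChartedSpace (EuclideanSpace ℝ (Fin 3)) WhiteheadManifold :=
  chartedSpaceOfIsOpenEmbedding fun p ↦ by
    obtain ⟨f, hf, hp⟩ := Telescope.exists_isOpenEmbedding exists_isOpenEmbedding_solidTorus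
      isOpenEmbedding_embedding p
    let e : EuclideanSpace ℝ (Fin 3) ≃L[ℝ] ℝ × ℂ := .ofFinrankEq (by simp)
    exact ⟨f ∘ e, hf.comp e.toHomeomorph.isOpenEmbedding, by rwa [e.surjective.range_comp]⟩

end WhiteheadManifold

/-- **The Whitehead manifold.** There exists a contractible open 3-manifold `W` which is
not simply connected at infinity — in particular not homeomorphic to `ℝ³` — but such that
`W × ℝ` is homeomorphic to `ℝ⁴`. -/
theorem exists_whitehead_manifold :
    ∃ W : ContractibleOpen3Manifold,
      ¬ SimplyConnectedAtInfinity W.carrier ∧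
      IsEmpty (W.carrier ≃ₜ EuclideanSpace ℝ (Fin 3)) ∧
      Nonempty ((W.carrier × ℝ) ≃ₜ EuclideanSpace ℝ (Fin 4)) := by
  have not_sci := WhiteheadManifold.not_simplyConnectedAtInfinity
  have euclidean_sci : SimplyConnectedAtInfinity (EuclideanSpace ℝ (Fin 3)) :=
    simplyConnectedAtInfinity_of_two_lt_finrank (by simp)
  exact ⟨⟨WhiteheadManifold⟩, not_sci, ⟨fun e ↦ not_sci (euclidean_sci.of_homeomorph e)⟩,
    WhiteheadManifold.nonempty_prod_real_homeomorph⟩
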